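/- arXiv:1303.1879 — 5 statements merged into one kernel-verified Lean document; each statement's English description precedes it below -/
import Mathlib

section
/- Let z = (z_1, …, z_q) ∈ (ℝ²)^q lie on no hyperplane of the move arrangement A_P^q, and let σ be a permutation of {1, …, q} with σ ≠ id. Then the permuted point σ·z = (z_{σ(1)}, …, z_{σ(q)}) has a different sign vector from z: there exist indices i < j and a basic move m ∈ M such that (z_j − z_i)·m^⊥ and (z_{σ(j)} − z_{σ(i)})·m^⊥ have opposite signs. Consequently the symmetric group S_q acts freely on the set of connected components of (B°)^q \ ⋃A_P^q, so there are exactly q! labelled nonattacking configuration types for each unlabelled type. -/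
open MeasureTheory

/-! A linear functional `φ` that takes distinct values on the points `z₁, …, z_q` orders them
linearly. If `σ` preserved every comparison of these values, it would be an order automorphism of
a finite linear order, hence the identity; so a single functional already detects `σ ≠ 1`.
On a connected component no functional `φ (z_j - z_i)` vanishes, so its sign is constant there,
and `z` and `σ · z` cannot lie in the same component. -/

theorem perm_eq_one_of_monovary {ι α : Type*} [Finite ι] [LinearOrder α] {f : ι → α}
    (hf : Function.Injective f) {σ : Equiv.Perm ι} (hσ : Monovary (f ∘ σ) f) : σ = 1 := by
  let _ : LinearOrder ι := LinearOrder.lift' f hf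
  have hmono : StrictMono σ := fun i j hij =>
    lt_of_le_of_ne (hσ hij) (σ.injective.ne hij.ne)
  let e : ι ≃o ι := hmono.orderIsoOfSurjective σ σ.surjective
  exact Equiv.ext fun i => congrArg (· i) (Subsingleton.elim e (OrderIso.refl ι))

theorem exists_lt_sub_mul_sub_comp_perm_neg {ι R : Type*} [Finite ι] [LinearOrder ι] [Ring R]
    [LinearOrder R] [IsStrictOrderedRing R] {f : ι → R} (hf : Function.Injective f)
    {σ : Equiv.Perm ι} (hσ : σ ≠ 1) :
    ∃ i j, i < j ∧ (f j - f i) * (f (σ j) - f (σ i)) < 0 := by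
  have hnot : ¬ Monovary f (f ∘ σ) := fun h => hσ (perm_eq_one_of_monovary hf h.symm)
  simp only [monovary_iff_forall_mul_nonneg, not_forall, not_le, Function.comp_apply] at hnot
  obtain ⟨i, j, hneg⟩ := hnot
  rcases lt_trichotomy i j with hij | rfl | hji
  · exact ⟨i, j, hij, hneg⟩
  · simp at hneg
  · refine ⟨j, i, hji, ?_⟩
    rwa [← neg_sub (f j), ← neg_sub (f (σ j)), neg_mul_neg]

theorem mul_pos_of_isPreconnected_of_ne_zero {X R : Type*} [TopologicalSpace X] [Ring R]
    [LinearOrder R] [IsStrictOrderedRing R] [TopologicalSpace R] [OrderClosedTopology R]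
    {s : Set X} (hs : IsPreconnected s) {g : X → R} (hg : ContinuousOn g s)
    (hg0 : ∀ x ∈ s, g x ≠ 0) {x y : X} (hx : x ∈ s) (hy : y ∈ s) : 0 < g x * g y := by
  have hzero : (0 : R) ∉ g '' s := fun ⟨w, hw, hw0⟩ => hg0 w hw hw0
  by_contra! hle
  rcases mul_nonpos_iff.1 hle with ⟨hx0, hy0⟩ | ⟨hx0, hy0⟩
  · exact hzero (hs.intermediate_value hy hx hg ⟨hy0, hx0⟩)
  · exact hzero (hs.intermediate_value hx hy hg ⟨hx0, hy0⟩)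

section MoveArrangement

variable {ι E : Type*} [AddCommGroup E] [Module ℝ E] [TopologicalSpace E]

/-- The complement of the move arrangement in `E^ι`. A move is encoded by the linear functional
`φ` it is tested with; in the plane this is the pairing with `m^⊥`. -/
def moveComplement (ι : Type*) (M : Set (E →L[ℝ] ℝ)) : Set (ι → E) :=
  {z | ∀ i j, i ≠ j → ∀ φ ∈ M, φ (z j - z i) ≠ 0}

/-- The labelled nonattacking configurations with all pieces in `U`. -/
def configurationSpace (ι : Type*) (M : Set (E →L[ℝ] ℝ)) (U : Set E) : Set (ι → E) :=
  {z | (∀ i, z i ∈ U) ∧ z ∈ moveComplement ι M}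

variable {M : Set (E →L[ℝ] ℝ)} {U : Set E} {z : ι → E}

theorem injective_apply_of_mem_moveComplement (hz : z ∈ moveComplement ι M) {φ : E →L[ℝ] ℝ}
    (hφ : φ ∈ M) : Function.Injective fun i => φ (z i) := by
  intro i j hij
  by_contra hne
  exact hz i j hne φ hφ (by rw [map_sub, sub_eq_zero]; exact hij.symm)

theorem comp_perm_mem_configurationSpace (hz : z ∈ configurationSpace ι M U)
    (σ : Equiv.Perm ι) : z ∘ σ ∈ configurationSpace ι M U :=
  ⟨fun i => hz.1 (σ i), fun i j hij => hz.2 (σ i) (σ j) (σ.injective.ne hij)⟩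

theorem exists_move_mul_comp_perm_neg [Finite ι] [LinearOrder ι] (hM : M.Nonempty)
    (hz : z ∈ moveComplement ι M) {σ : Equiv.Perm ι} (hσ : σ ≠ 1) :
    ∃ i j, i < j ∧ ∃ φ ∈ M, φ (z j - z i) * φ (z (σ j) - z (σ i)) < 0 := by
  obtain ⟨φ, hφ⟩ := hM
  obtain ⟨i, j, hij, hneg⟩ :=
    exists_lt_sub_mul_sub_comp_perm_neg (injective_apply_of_mem_moveComplement hz hφ) hσ
  exact ⟨i, j, hij, φ, hφ, by simpa only [map_sub] using hneg⟩

theorem move_mul_pos_of_mem_connectedComponentIn {Ω : Set (ι → E)} (hΩ : Ω ⊆ moveComplement ι M)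
    (hz : z ∈ Ω) {w : ι → E} (hw : w ∈ connectedComponentIn Ω z) {i j : ι} (hij : i ≠ j)
    {φ : E →L[ℝ] ℝ} (hφ : φ ∈ M) : 0 < φ (z j - z i) * φ (w j - w i) := by
  have hcont : Continuous fun v : ι → E => φ (v j - v i) := by
    simp only [map_sub]
    fun_prop
  exact mul_pos_of_isPreconnected_of_ne_zero isPreconnected_connectedComponentIn hcont.continuousOn
    (fun v hv => hΩ (connectedComponentIn_subset Ω z hv) i j hij φ hφ)
    (mem_connectedComponentIn hz) hw

theorem connectedComponentIn_comp_perm_ne [Finite ι] (hM : M.Nonempty)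
    (hz : z ∈ configurationSpace ι M U) {σ : Equiv.Perm ι} (hσ : σ ≠ 1) :
    connectedComponentIn (configurationSpace ι M U) (z ∘ σ) ≠
      connectedComponentIn (configurationSpace ι M U) z := by
  intro heq
  have hmem : z ∘ σ ∈ connectedComponentIn (configurationSpace ι M U) z :=
    heq ▸ mem_connectedComponentIn (comp_perm_mem_configurationSpace hz σ)
  classical
  let _ : LinearOrder ι := linearOrderOfSTO WellOrderingRel
  obtain ⟨i, j, hij, φ, hφ, hneg⟩ := exists_move_mul_comp_perm_neg hM hz.2 hσ
  exact hneg.not_gt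
    (move_mul_pos_of_mem_connectedComponentIn (fun _ hv => hv.2) hz hmem hij.ne hφ)

theorem stmt_6_general [Finite ι] [LinearOrder ι] (hM : M.Nonempty) (U : Set E) :
    (∀ z ∈ moveComplement ι M, ∀ σ : Equiv.Perm ι, σ ≠ 1 →
      ∃ i j, i < j ∧ ∃ φ ∈ M, φ (z j - z i) * φ (z (σ j) - z (σ i)) < 0) ∧
    (∀ z ∈ configurationSpace ι M U, ∀ σ : Equiv.Perm ι, σ ≠ 1 →
      connectedComponentIn (configurationSpace ι M U) (z ∘ σ) ≠
        connectedComponentIn (configurationSpace ι M U) z) :=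
  ⟨fun _ hz _ hσ => exists_move_mul_comp_perm_neg hM hz hσ,
    fun _ hz _ hσ => connectedComponentIn_comp_perm_ne hM hz hσ⟩

end MoveArrangement

/-- The pairing `p ↦ p · m^⊥` with `m^⊥ = (d, -c)` for a basic move `m = (c, d)`. -/
noncomputable def moveFunctional (m : ℤ × ℤ) : ℝ × ℝ →L[ℝ] ℝ :=
  (m.2 : ℝ) • ContinuousLinearMap.fst ℝ ℝ ℝ - (m.1 : ℝ) • ContinuousLinearMap.snd ℝ ℝ ℝ

theorem moveFunctional_apply (m : ℤ × ℤ) (p : ℝ × ℝ) :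
    moveFunctional m p = p.1 * m.2 - p.2 * m.1 := by
  simp [moveFunctional, mul_comm]

/-- a nontrivial permutation of a point lying on no move hyperplane changes
its sign vector; consequently the symmetric group acts freely on the connected components
of `(B°)^q \ ⋃A_P^q`. -/
theorem stmt_6
    (M : Finset (ℤ × ℤ)) (hMne : M.Nonempty)
    (hMmove : ∀ m ∈ M, m ≠ 0 ∧ Int.gcd m.1 m.2 = 1)
    (hMpar : ∀ m ∈ M, ∀ m' ∈ M, m ≠ m' → m.1 * m'.2 - m.2 * m'.1 ≠ 0)
    (V : Finset (ℝ × ℝ)) (hV : ∀ v ∈ V, ∃ a b : ℚ, v = ((a : ℝ), (b : ℝ)))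
    (B : Set (ℝ × ℝ)) (hB : B = convexHull ℝ (V : Set (ℝ × ℝ)))
    (hBint : (interior B).Nonempty)
    (q : ℕ) (hq : 0 < q)
    (Ω : Set (Fin q → ℝ × ℝ))
    (hΩ : Ω = {z : Fin q → ℝ × ℝ | (∀ i : Fin q, z i ∈ interior B) ∧
      ∀ i j : Fin q, i ≠ j → ∀ m ∈ M,
        ((z j).1 - (z i).1) * (m.2 : ℝ) - ((z j).2 - (z i).2) * (m.1 : ℝ) ≠ 0}) :
    -- the sign vector changes under any nontrivial permutation:
    (∀ z : Fin q → ℝ × ℝ,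
      (∀ i j : Fin q, i ≠ j → ∀ m ∈ M,
        ((z j).1 - (z i).1) * (m.2 : ℝ) - ((z j).2 - (z i).2) * (m.1 : ℝ) ≠ 0) →
      ∀ σ : Equiv.Perm (Fin q), σ ≠ 1 →
        ∃ i j : Fin q, i < j ∧ ∃ m ∈ M,
          (((z j).1 - (z i).1) * (m.2 : ℝ) - ((z j).2 - (z i).2) * (m.1 : ℝ)) *
            (((z (σ j)).1 - (z (σ i)).1) * (m.2 : ℝ)
              - ((z (σ j)).2 - (z (σ i)).2) * (m.1 : ℝ)) < 0) ∧
    -- consequently the S_q-action on the components is free: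
    (∀ z ∈ Ω, ∀ σ : Equiv.Perm (Fin q), σ ≠ 1 →
      connectedComponentIn Ω (fun i => z (σ i)) ≠ connectedComponentIn Ω z) := by
  subst hΩ
  simpa only [configurationSpace, moveComplement, Set.mem_ofPred_eq, Set.forall_mem_image,
    Set.exists_mem_image, moveFunctional_apply, Prod.fst_sub, Prod.snd_sub, Finset.mem_coe,
    Function.comp_def] using
    stmt_6_general (ι := Fin q) (hMne.to_set.image moveFunctional) (interior B)
end

section
/- Suppose |M| ≥ 2. Let t be a positive integer and let z = (z_1, …, z_q) and z' = (z'_1, …, z'_q) be points of (t·B°)^q ∩ (ℤ²)^q lying on no hyperplane of the move arrangement A_P^q and having the same sign vector (i.e., lying in the same connected component of (t·B°)^q \ ⋃A_P^q). Then there exist a positive integer τ and a finite sequence w_0 = z, w_1, …, w_l = z' of points of (t·B°)^q with all coordinates in (1/τ)ℤ, such that every w_s lies on no move hyperplane and has the same sign vector as z, and for each s the difference w_{s+1} − w_s is zero in all but one of the q coordinate pairs and in that coordinate pair equals a rational scalar multiple of some basic move m ∈ M. (Discrete isotopy, allowing refinement of the lattice, produces the same equivalence relation on nonattacking configurations as continuous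 isotopy.) -/
open MeasureTheory Pointwise

/-!
The configurations in a convex region with a prescribed sign vector form an open convex set, so the
segment from `z` to `z'` has a positive distance from its complement. Cut this segment into `N`
equal parts. Two non-parallel basic moves `m`, `n` span the plane, so each part is a sum of single
piece moves along `m` and `n`, whose total length is `O(1/N)`: performed one after the other, they
stay close to the segment. By Cramer's rule they live on the lattice refined by `N * det (m, n)`.
-/

open Relation (ReflTransGen)

theorem exists_seq_of_reflTransGen {α : Type*} {r : α → α → Prop} {a b : α}
    (h : ReflTransGen r a b) :
    ∃ (l : ℕ) (w : ℕ → α), w 0 = a ∧ w l = b ∧ ∀ s < l, r (w s) (w (s + 1)) := by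
  induction h using ReflTransGen.head_induction_on with
  | refl => exact ⟨0, fun _ => b, rfl, rfl, by simp⟩
  | @head a c hac _ ih =>
    obtain ⟨l, w, rfl, hwl, hw⟩ := ih
    refine ⟨l + 1, fun s => s.casesOn a w, rfl, hwl, fun s hs => ?_⟩
    cases s with
    | zero => exact hac
    | succ s => exact hw s (Nat.lt_of_succ_lt_succ hs)

section Staircase

variable {E κ : Type*} [SeminormedAddCommGroup E] {G : Set E}

theorem reflTransGen_add_sum_of_ball_subset {x : E} {ε : ℝ} (hball : Metric.ball x ε ⊆ G)
    (v : κ → E) (T : Finset κ) (hT : ∑ k ∈ T, ‖v k‖ < ε) :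
    ReflTransGen (fun p p' => p' ∈ G ∧ ∃ k, p' = p + v k) x (x + ∑ k ∈ T, v k) := by
  classical
  induction T using Finset.induction_on with
  | empty => simpa using ReflTransGen.refl
  | insert k T hk ih =>
    have hmem : x + ∑ k ∈ insert k T, v k ∈ G :=
      hball (by simpa using (norm_sum_le _ _).trans_lt hT)
    have hlt : ∑ k ∈ T, ‖v k‖ < ε := by
      rw [Finset.sum_insert hk] at hT
      linarith [norm_nonneg (v k)]
    refine (ih hlt).tail ⟨hmem, k, ?_⟩
    rw [Finset.sum_insert hk, add_comm (v k), add_assoc]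

theorem exists_reflTransGen_of_segment_subset [NormedSpace ℝ E] [Fintype κ] (hG : IsOpen G)
    {x y : E} (hseg : segment ℝ x y ⊆ G) (v : κ → E) (hv : ∑ k, v k = y - x) :
    ∃ N : ℕ, 0 < N ∧
      ReflTransGen (fun p p' => p' ∈ G ∧ ∃ k, p' = p + (N : ℝ)⁻¹ • v k) x y := by
  rw [segment_eq_image'] at hseg
  obtain ⟨δ, hδ, hδG⟩ :=
    (isCompact_Icc.image (by fun_prop)).exists_thickening_subset_open hG hseg
  obtain ⟨N, hN⟩ := exists_nat_gt ((∑ k, ‖v k‖) / δ)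
  have hN0 : (0 : ℝ) < N := lt_of_le_of_lt (by positivity) hN
  have hsmall : ∑ k, ‖(N : ℝ)⁻¹ • v k‖ < δ := by
    simp_rw [norm_smul, norm_inv, RCLike.norm_natCast, ← Finset.mul_sum]
    rwa [inv_mul_lt_iff₀ hN0, ← div_lt_iff₀ hδ]
  have hround (a : ℕ) (ha : a ≤ N) :
      ReflTransGen (fun p p' => p' ∈ G ∧ ∃ k, p' = p + (N : ℝ)⁻¹ • v k) x
        (x + ((a : ℝ) / N) • (y - x)) := by
    induction a with
    | zero => simpa using ReflTransGen.refl
    | succ a ih =>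
      have hmem : (a : ℝ) / N ∈ Set.Icc (0 : ℝ) 1 :=
        ⟨by positivity, div_le_one_of_le₀ (by exact_mod_cast (by omega : a ≤ N)) hN0.le⟩
      have hball := (Metric.ball_subset_thickening (Set.mem_image_of_mem _ hmem) δ).trans hδG
      convert (ih (by omega)).trans (reflTransGen_add_sum_of_ball_subset hball _ _ hsmall) using 1
      rw [← Finset.smul_sum, hv]
      push_cast
      module
  refine ⟨N, by exact_mod_cast hN0, ?_⟩
  simpa [hN0.ne'] using hround N le_rfl

end Staircase

/-- The pairing `u · m^⊥` with `m^⊥ = (d, -c)` for `m = (c, d)`, over an arbitrary ring so that it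
applies to integral and to real vectors. -/
def perpDot {R : Type*} [CommRing R] (u m : R × R) : R := u.1 * m.2 - u.2 * m.1

theorem perpDot_smul_eq_add {R : Type*} [CommRing R] (m n u : R × R) :
    perpDot m n • u = perpDot u n • m + perpDot m u • n := by
  ext <;> simp only [perpDot, Prod.smul_fst, Prod.smul_snd, Prod.fst_add, Prod.snd_add,
    smul_eq_mul] <;> ring

/-- An integral vector, seen in the real plane. -/
def toPlane (p : ℤ × ℤ) : ℝ × ℝ := ((p.1 : ℝ), (p.2 : ℝ))

theorem toPlane_sub (p p' : ℤ × ℤ) : toPlane (p - p') = toPlane p - toPlane p' := by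
  simp [toPlane]

theorem perpDot_toPlane (u m : ℤ × ℤ) : perpDot (toPlane u) (toPlane m) = perpDot u m := by
  simp [perpDot, toPlane]

/-- The lattice `(1/τ)ℤ²`. It degenerates to `{0}` for `τ = 0`. -/
def refinedLattice (τ : ℕ) : AddSubgroup (ℝ × ℝ) where
  carrier := {p | ∃ a b : ℤ, p = ((a : ℝ) / (τ : ℝ), (b : ℝ) / (τ : ℝ))}
  zero_mem' := ⟨0, 0, by simp [Prod.ext_iff]⟩
  add_mem' := by
    rintro _ _ ⟨a, b, rfl⟩ ⟨a', b', rfl⟩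
    exact ⟨a + a', b + b', by simp [add_div]⟩
  neg_mem' := by
    rintro _ ⟨a, b, rfl⟩
    exact ⟨-a, -b, by simp [neg_div]⟩

theorem div_smul_toPlane_mem_refinedLattice (τ : ℕ) (a : ℤ) (p : ℤ × ℤ) :
    ((a : ℝ) / τ) • toPlane p ∈ refinedLattice τ :=
  ⟨a * p.1, a * p.2, by simp [toPlane, mul_div_right_comm]⟩

theorem toPlane_mem_refinedLattice {τ : ℕ} (hτ : 0 < τ) (p : ℤ × ℤ) :
    toPlane p ∈ refinedLattice τ := by
  simpa [hτ.ne'] using div_smul_toPlane_mem_refinedLattice τ τ p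

theorem toPlane_eq_add_of_perpDot_ne_zero {m n : ℤ × ℤ} (hmn : perpDot m n ≠ 0) (u : ℤ × ℤ) :
    toPlane u = (((perpDot u n : ℤ) : ℝ) / (perpDot m n : ℤ)) • toPlane m +
      (((perpDot m u : ℤ) : ℝ) / (perpDot m n : ℤ)) • toPlane n := by
  have hdet : ((perpDot m n : ℤ) : ℝ) ≠ 0 := by exact_mod_cast hmn
  have hcramer := perpDot_smul_eq_add (toPlane m) (toPlane n) (toPlane u)
  simp only [perpDot_toPlane] at hcramer
  rw [div_eq_inv_mul, div_eq_inv_mul, mul_smul, mul_smul, ← smul_add, ← hcramer,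
    inv_smul_smul₀ hdet]

section SignCell

variable {ι : Type*}

/-- The configurations with the same sign vector as `z`: for each pair of pieces and each basic
move in `M`, the product of the two pairings is positive. It is empty when `z` lies on a move
hyperplane. -/
def signCell (M : Set (ℤ × ℤ)) (z : ι → ℝ × ℝ) : Set (ι → ℝ × ℝ) :=
  {w | ∀ i j, i ≠ j → ∀ m ∈ M,
    0 < perpDot (w j - w i) (toPlane m) * perpDot (z j - z i) (toPlane m)}

theorem signCell_eq_iInter (M : Set (ℤ × ℤ)) (z : ι → ℝ × ℝ) :
    signCell M z = ⋂ (i) (j) (_ : i ≠ j) (m ∈ M),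
      {w | 0 < perpDot (w j - w i) (toPlane m) * perpDot (z j - z i) (toPlane m)} := by
  ext w
  simp [signCell]

theorem convex_signCell (M : Set (ℤ × ℤ)) (z : ι → ℝ × ℝ) : Convex ℝ (signCell M z) := by
  rw [signCell_eq_iInter]
  refine convex_iInter fun i => convex_iInter fun j => convex_iInter fun _ => convex_iInter₂
    fun m _ => convex_halfSpace_gt ⟨fun w w' => ?_, fun c w => ?_⟩ 0 <;>
  simp only [perpDot, Pi.add_apply, Pi.smul_apply, Prod.fst_sub, Prod.snd_sub, Prod.fst_add,
    Prod.snd_add, Prod.smul_fst, Prod.smul_snd, smul_eq_mul] <;> ring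

theorem isOpen_signCell [Finite ι] {M : Set (ℤ × ℤ)} (hM : M.Finite) (z : ι → ℝ × ℝ) :
    IsOpen (signCell M z) := by
  rw [signCell_eq_iInter]
  refine isOpen_iInter_of_finite fun i => isOpen_iInter_of_finite fun j =>
    isOpen_iInter_of_finite fun _ => hM.isOpen_biInter fun m _ => ?_
  exact isOpen_lt continuous_const (by unfold perpDot; fun_prop)

variable {M : Set (ℤ × ℤ)} {z z' : ι → ℤ × ℤ}

theorem toPlane_comp_mem_signCell_iff :
    toPlane ∘ z' ∈ signCell M (toPlane ∘ z) ↔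
      ∀ i j, i ≠ j → ∀ m ∈ M, 0 < perpDot (z j - z i) m * perpDot (z' j - z' i) m := by
  simp only [signCell, Set.mem_ofPred_eq, Function.comp_apply, ← toPlane_sub, perpDot_toPlane]
  simp_rw [mul_comm (perpDot (z _ - z _) _)]
  norm_cast

theorem self_mem_signCell_of_mem {z w : ι → ℝ × ℝ} (hw : w ∈ signCell M z) : z ∈ signCell M z :=
  fun i j hij m hm => mul_self_pos.2 (right_ne_zero_of_mul (hw i j hij m hm).ne')

end SignCell

/-- A step of a discrete isotopy on `(1/τ)ℤ²`: a single piece moves by an element of `(1/τ)ℤ` times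
a basic move in `M`. -/
def IsLatticeMove {ι : Type*} (M : Set (ℤ × ℤ)) (τ : ℕ) (w w' : ι → ℝ × ℝ) : Prop :=
  ∃ i₀, (∀ i, i ≠ i₀ → w' i = w i) ∧
    ∃ m ∈ M, ∃ a : ℤ, w' i₀ - w i₀ = ((a : ℝ) / τ) • toPlane m

section LatticeMove

variable {ι : Type*} {M : Set (ℤ × ℤ)} {τ : ℕ}

theorem isLatticeMove_add_single [DecidableEq ι] (w : ι → ℝ × ℝ) (i : ι) {m : ℤ × ℤ} (hm : m ∈ M)
    (a : ℤ) : IsLatticeMove M τ w (w + Pi.single i (((a : ℝ) / τ) • toPlane m)) :=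
  ⟨i, fun j hj => by simp [hj], m, hm, a, by simp⟩

theorem IsLatticeMove.mem_refinedLattice {w w' : ι → ℝ × ℝ} (h : IsLatticeMove M τ w w')
    (hw : ∀ i, w i ∈ refinedLattice τ) (i : ι) : w' i ∈ refinedLattice τ := by
  obtain ⟨i₀, hfix, m, -, a, hmove⟩ := h
  by_cases hi : i = i₀
  · rw [hi, ← sub_add_cancel (w' i₀) (w i₀), hmove]
    exact add_mem (div_smul_toPlane_mem_refinedLattice τ a m) (hw i₀)
  · rw [hfix i hi]
    exact hw i

theorem exists_reflTransGen_isLatticeMove [Finite ι] {m n : ℤ × ℤ} (hm : m ∈ M) (hn : n ∈ M)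
    (hmn : perpDot m n ≠ 0) {C : Set (ι → ℝ × ℝ)} (hC : IsOpen C) {z z' : ι → ℤ × ℤ}
    (hseg : segment ℝ (toPlane ∘ z) (toPlane ∘ z') ⊆ C) :
    ∃ τ : ℕ, 0 < τ ∧ ReflTransGen (fun w w' => w' ∈ C ∧ IsLatticeMove M τ w w')
      (toPlane ∘ z) (toPlane ∘ z') := by
  classical
  have := Fintype.ofFinite ι
  wlog hpos : 0 < perpDot m n generalizing m n
  · have hswap : perpDot n m = -perpDot m n := by simp only [perpDot]; ring
    exact this hn hm (by simpa [hswap]) (by omega)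
  lift perpDot m n to ℕ using hpos.le with d hd
  -- Each piece `i` makes one step along `m` and one along `n`, which together take it to `z' i`.
  let v : ι ⊕ ι → ι → ℝ × ℝ := Sum.elim
    (fun i => Pi.single i ((((perpDot (z' i - z i) n : ℤ) : ℝ) / d) • toPlane m))
    (fun i => Pi.single i ((((perpDot m (z' i - z i) : ℤ) : ℝ) / d) • toPlane n))
  have hv : ∑ k, v k = toPlane ∘ z' - toPlane ∘ z := by
    funext i
    have hdecomp := toPlane_eq_add_of_perpDot_ne_zero (hd ▸ hmn) (z' i - z i)
    rw [toPlane_sub, ← hd, Int.cast_natCast] at hdecomp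
    simp [v, Fintype.sum_sum_type, hdecomp]
  obtain ⟨N, hN, hchain⟩ := exists_reflTransGen_of_segment_subset hC hseg v hv
  refine ⟨N * d, Nat.mul_pos hN (by exact_mod_cast hpos), ReflTransGen.mono ?_ _ _ hchain⟩
  have hscale (c : ℤ) : (N : ℝ)⁻¹ * ((c : ℝ) / d) = c / (N * d : ℕ) := by
    push_cast
    field_simp
  rintro w _ ⟨hmem, i | i, rfl⟩ <;> refine ⟨hmem, ?_⟩ <;>
    simp only [v, Sum.elim_inl, Sum.elim_inr, ← Pi.single_smul, smul_smul, hscale]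
  · exact isLatticeMove_add_single w i hm _
  · exact isLatticeMove_add_single w i hn _

end LatticeMove

theorem stmt_10_general {ι : Type*} [Finite ι] {M : Set (ℤ × ℤ)} (hM : M.Finite)
    {m n : ℤ × ℤ} (hm : m ∈ M) (hn : n ∈ M) (hmn : perpDot m n ≠ 0)
    {U : Set (ℝ × ℝ)} (hUo : IsOpen U) (hUc : Convex ℝ U)
    {z z' : ι → ℤ × ℤ} (hz : ∀ i, toPlane (z i) ∈ U) (hz' : ∀ i, toPlane (z' i) ∈ U)
    (hsign : ∀ i j, i ≠ j → ∀ k ∈ M, 0 < perpDot (z j - z i) k * perpDot (z' j - z' i) k) :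
    ∃ τ : ℕ, 0 < τ ∧ ∃ (l : ℕ) (w : ℕ → ι → ℝ × ℝ), w 0 = toPlane ∘ z ∧ w l = toPlane ∘ z' ∧
      (∀ s ≤ l, ∀ i, w s i ∈ refinedLattice τ ∧ w s i ∈ U) ∧
      (∀ s ≤ l, w s ∈ signCell M (toPlane ∘ z)) ∧
      ∀ s < l, ∃ i₀, (∀ i, i ≠ i₀ → w (s + 1) i = w s i) ∧
        ∃ k ∈ M, ∃ c : ℚ, w (s + 1) i₀ - w s i₀ = (c : ℝ) • toPlane k := by
  let C : Set (ι → ℝ × ℝ) := Set.univ.pi (fun _ => U) ∩ signCell M (toPlane ∘ z)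
  have hCo : IsOpen C :=
    (isOpen_set_pi Set.finite_univ fun _ _ => hUo).inter (isOpen_signCell hM _)
  have hCc : Convex ℝ C := (convex_pi fun _ _ => hUc).inter (convex_signCell M _)
  have hcell' := toPlane_comp_mem_signCell_iff.2 hsign
  have hzC : toPlane ∘ z ∈ C := ⟨fun i _ => hz i, self_mem_signCell_of_mem hcell'⟩
  have hzC' : toPlane ∘ z' ∈ C := ⟨fun i _ => hz' i, hcell'⟩
  obtain ⟨τ, hτ, hchain⟩ :=
    exists_reflTransGen_isLatticeMove hm hn hmn hCo (hCc.segment_subset hzC hzC')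
  obtain ⟨l, w, hw0, hwl, hw⟩ := exists_seq_of_reflTransGen hchain
  have hinv (s : ℕ) (hs : s ≤ l) : w s ∈ C ∧ ∀ i, w s i ∈ refinedLattice τ := by
    induction s with
    | zero => exact hw0 ▸ ⟨hzC, fun i => toPlane_mem_refinedLattice hτ (z i)⟩
    | succ s ih => exact ⟨(hw s hs).1, (hw s hs).2.mem_refinedLattice (ih (by omega)).2⟩
  refine ⟨τ, hτ, l, w, hw0, hwl, fun s hs i => ⟨(hinv s hs).2 i, (hinv s hs).1.1 i trivial⟩,
    fun s hs => (hinv s hs).1.2, fun s hs => ?_⟩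
  obtain ⟨-, i₀, hfix, k, hk, a, hmove⟩ := hw s hs
  exact ⟨i₀, hfix, k, hk, a / τ, by exact_mod_cast hmove⟩

/-- if `|M| ≥ 2`, two integral nonattacking configurations on `t·B°` with the
same sign vector are connected by a discrete isotopy on a refined lattice `(1/τ)ℤ²`:
a sequence of single-piece moves along basic move directions, staying nonattacking with the
same sign vector throughout. -/
theorem stmt_10
    (M : Finset (ℤ × ℤ)) (hMcard : 2 ≤ M.card)
    (hMmove : ∀ m ∈ M, m ≠ 0 ∧ Int.gcd m.1 m.2 = 1)
    (hMpar : ∀ m ∈ M, ∀ m' ∈ M, m ≠ m' → m.1 * m'.2 - m.2 * m'.1 ≠ 0)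
    (V : Finset (ℝ × ℝ)) (hV : ∀ v ∈ V, ∃ a b : ℚ, v = ((a : ℝ), (b : ℝ)))
    (B : Set (ℝ × ℝ)) (hB : B = convexHull ℝ (V : Set (ℝ × ℝ)))
    (hBint : (interior B).Nonempty)
    (q : ℕ) (hq : 0 < q)
    (t : ℕ) (ht : 0 < t)
    (z z' : Fin q → ℤ × ℤ)
    (hzB : ∀ i : Fin q, ((((z i).1 : ℝ), ((z i).2 : ℝ)) : ℝ × ℝ) ∈ (t : ℝ) • interior B)
    (hz'B : ∀ i : Fin q, ((((z' i).1 : ℝ), ((z' i).2 : ℝ)) : ℝ × ℝ) ∈ (t : ℝ) • interior B)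
    -- z and z' lie on no move hyperplane and have the same sign vector:
    (hsign : ∀ i j : Fin q, i ≠ j → ∀ m ∈ M,
      (((z j).1 - (z i).1) * m.2 - ((z j).2 - (z i).2) * m.1) *
        (((z' j).1 - (z' i).1) * m.2 - ((z' j).2 - (z' i).2) * m.1) > 0) :
    ∃ τ : ℕ, 0 < τ ∧ ∃ l : ℕ, ∃ w : ℕ → Fin q → ℝ × ℝ,
      (w 0 = fun i => (((z i).1 : ℝ), ((z i).2 : ℝ))) ∧
      (w l = fun i => (((z' i).1 : ℝ), ((z' i).2 : ℝ))) ∧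
      -- each configuration has coordinates in (1/τ)ℤ and lies in t·B°:
      (∀ s ≤ l, ∀ i : Fin q,
        (∃ a b : ℤ, w s i = ((a : ℝ) / (τ : ℝ), (b : ℝ) / (τ : ℝ))) ∧
        w s i ∈ (t : ℝ) • interior B) ∧
      -- each configuration avoids the move hyperplanes and has the same sign vector as z:
      (∀ s ≤ l, ∀ i j : Fin q, i ≠ j → ∀ m ∈ M,
        (((w s j).1 - (w s i).1) * (m.2 : ℝ) - ((w s j).2 - (w s i).2) * (m.1 : ℝ)) *
          ((((z j).1 : ℝ) - ((z i).1 : ℝ)) * (m.2 : ℝ)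
            - (((z j).2 : ℝ) - ((z i).2 : ℝ)) * (m.1 : ℝ)) > 0) ∧
      -- each step moves a single piece along a rational multiple of a basic move:
      (∀ s < l, ∃ i₀ : Fin q,
        (∀ i : Fin q, i ≠ i₀ → w (s + 1) i = w s i) ∧
        ∃ m ∈ M, ∃ c : ℚ,
          w (s + 1) i₀ - w s i₀ = (c : ℝ) • (((m.1 : ℝ), (m.2 : ℝ)) : ℝ × ℝ)) := by
  obtain ⟨m, hm, n, hn, hmn⟩ := Finset.one_lt_card.1 hMcard
  exact stmt_10_general M.finite_toSet hm hn (hMpar m hm n hn hmn)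
    (isOpen_interior.smul₀ (Nat.cast_ne_zero.2 ht.ne'))
    ((hB ▸ convex_convexHull ℝ _ : Convex ℝ B).interior.smul _) hzB hz'B hsign
end

section
/- For q = 1, the number of nonattacking configuration types is 1: B° itself is connected. For q = 2, the number of connected components of (B°)² \ ⋃_{m ∈ M} H^m_{12} equals 2·|M|; consequently the number of unlabelled nonattacking configuration types of two pieces equals |M|, the number of basic moves. -/
open MeasureTheory

/-!
On the complement of an arrangement of hyperplanes inside a convex set, two points lie in the same
component exactly when they have the same sign vector: the points with a given sign vector form a
convex set, and no sign can change along a connected set. So components of the configuration space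
are counted by the sign vectors of the differences `z.2 - z.1`, and swapping the pieces negates
these. Since the board has interior points, every direction off the lines spanned by the moves
occurs as a difference.

The sign vectors of `n` distinct lines through the origin of the plane are counted by labelling each
sector with the ray it borders on a fixed side: a slight rotation of the ray of `v a` has the sign
vector of `v a` with the entry `0` at `a` replaced by `1`. These `n` sign vectors and their
negatives are pairwise distinct, and every generic direction `w` has one of them, namely for the
line of largest cotangent relative to `w`.
-/

section Counting

open Set
open scoped Pointwise

theorem ncard_image_eq_ncard_image_of_eq_iff_eq {α β γ : Type*} {f : α → β} {g : α → γ} {s : Set α}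
    (h : ∀ x ∈ s, ∀ y ∈ s, f x = f y ↔ g x = g y) : (f '' s).ncard = (g '' s).ncard := by
  have hker : Setoid.ker (s.domRestrict f) = Setoid.ker (s.domRestrict g) :=
    Setoid.ext fun x y => h x x.2 y y.2
  rw [← range_domRestrict, ← range_domRestrict, ← Nat.card_coe_set_eq, ← Nat.card_coe_set_eq,
    ← Nat.card_congr (Setoid.quotientKerEquivRange _), hker,
    Nat.card_congr (Setoid.quotientKerEquivRange _)]

variable {G : Type*} [InvolutiveNeg G] {A : Set G}

theorem ncard_union_neg (hA : Disjoint A (-A)) (hfin : A.Finite) :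
    (A ∪ -A).ncard = 2 * A.ncard := by
  rw [ncard_union_eq hA hfin hfin.neg, ncard_neg, two_mul]

theorem ncard_image_pair_neg_union_neg (hA : Disjoint A (-A)) :
    ((fun x => ({x, -x} : Set G)) '' (A ∪ -A)).ncard = A.ncard := by
  have himage_neg : (fun x => ({x, -x} : Set G)) '' (-A) = (fun x => {x, -x}) '' A := by
    simp only [← image_neg_eq_neg, image_image, neg_neg, pair_comm]
  rw [image_union, himage_neg, union_self]
  refine InjOn.ncard_image fun x hx y hy hxy => ?_
  rcases pair_eq_pair_iff.1 hxy with ⟨h, -⟩ | ⟨h, -⟩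
  · exact h
  · exact absurd (h ▸ hx : -y ∈ A) fun hny => disjoint_left.1 hA hny (by simpa using hy)

end Counting

section Arrangement

open Set SignType

variable {ι F X : Type*} [FunLike F X ℝ]

/-- The complement in `W` of the arrangement of the zero sets of the functions `f i`. -/
def arrangementComplement (f : ι → F) (W : Set X) : Set X :=
  {x ∈ W | ∀ i, f i x ≠ 0}

/-- The sign vector of a point `x` with respect to the functions `f i`: it records on which side of
(or whether on) each zero set `x` lies. -/
noncomputable def signVector (f : ι → F) (x : X) : ι → SignType :=
  fun i => sign (f i x)

theorem signVector_eq_of_connectedComponentIn_eq [TopologicalSpace X] [ContinuousMapClass F X ℝ]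
    {f : ι → F} {W : Set X} {x y : X} (hx : x ∈ arrangementComplement f W)
    (hy : y ∈ arrangementComplement f W)
    (h : connectedComponentIn (arrangementComplement f W) x =
      connectedComponentIn (arrangementComplement f W) y) :
    signVector f x = signVector f y := by
  funext i
  have hcont : ContinuousOn (fun z => sign (f i z)) (arrangementComplement f W) := fun z hz =>
    ((continuousAt_sign_of_ne_zero (hz.2 i)).comp
      (map_continuous (f i)).continuousAt).continuousWithinAt
  exact isPreconnected_connectedComponentIn.constant (hcont.mono (connectedComponentIn_subset _ x))
    (mem_connectedComponentIn hx) (h ▸ mem_connectedComponentIn hy)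

theorem signVector_neg [AddGroup X] [AddMonoidHomClass F X ℝ] (f : ι → F) (x : X) :
    signVector f (-x) = -signVector f x := by
  funext i
  simp only [signVector, map_neg, Left.sign_neg, Pi.neg_apply]

theorem neg_mem_arrangementComplement_univ [AddGroup X] [AddMonoidHomClass F X ℝ] {f : ι → F}
    {x : X} (hx : x ∈ arrangementComplement f univ) : -x ∈ arrangementComplement f univ :=
  ⟨mem_univ _, fun i => map_neg (f i) x ▸ neg_ne_zero.2 (hx.2 i)⟩

theorem signVector_smul_of_pos [AddCommMonoid X] [Module ℝ X] [LinearMapClass F ℝ X ℝ]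
    (f : ι → F) {δ : ℝ} (hδ : 0 < δ) (x : X) : signVector f (δ • x) = signVector f x := by
  funext i
  simp only [signVector, map_smul, smul_eq_mul, sign_mul, sign_pos hδ, one_mul]

theorem mem_arrangementComplement_univ_iff {f : ι → F} {x : X} :
    x ∈ arrangementComplement f univ ↔ ∀ i, signVector f x i ≠ 0 := by
  simp only [arrangementComplement, signVector, mem_ofPred_eq, mem_univ, true_and, sign_ne_zero]

end Arrangement

section AffineArrangement

open Set SignType

variable {ι E : Type*} [AddCommGroup E] [Module ℝ E] [TopologicalSpace E]
  {f : ι → E →ᴬ[ℝ] ℝ} {W : Set E}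

theorem convex_setOf_signVector_eq (hW : Convex ℝ W) (σ : ι → SignType) :
    Convex ℝ {x ∈ W | signVector f x = σ} := by
  have hfiber (i : ι) : Convex ℝ ((f i : E →ᵃ[ℝ] ℝ) ⁻¹' (sign ⁻¹' {σ i})) :=
    ((ordConnected_singleton.preimage_mono sign.monotone).convex).affine_preimage _
  have heq : {x ∈ W | signVector f x = σ} = W ∩ ⋂ i, (f i : E →ᵃ[ℝ] ℝ) ⁻¹' (sign ⁻¹' {σ i}) := by
    ext x
    simp [signVector, funext_iff]
  exact heq ▸ hW.inter (convex_iInter hfiber)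

variable [IsTopologicalAddGroup E] [ContinuousSMul ℝ E]

theorem connectedComponentIn_eq_iff_signVector_eq (hW : Convex ℝ W) {x y : E}
    (hx : x ∈ arrangementComplement f W) (hy : y ∈ arrangementComplement f W) :
    connectedComponentIn (arrangementComplement f W) x =
      connectedComponentIn (arrangementComplement f W) y ↔ signVector f x = signVector f y := by
  refine ⟨signVector_eq_of_connectedComponentIn_eq hx hy, fun hxy => ?_⟩
  have hsub : {z ∈ W | signVector f z = signVector f y} ⊆ arrangementComplement f W :=
    fun z hz => ⟨hz.1, fun i => sign_ne_zero.1 <|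
      (congrFun hz.2 i).trans_ne (sign_ne_zero.2 (hy.2 i))⟩
  exact connectedComponentIn_eq <| (convex_setOf_signVector_eq hW _).isPreconnected
    |>.subset_connectedComponentIn ⟨hx.1, hxy⟩ hsub ⟨hy.1, rfl⟩

end AffineArrangement

section NonattackingPairs

open Set SignType Filter Topology

variable {ι E : Type*} [AddCommGroup E] [Module ℝ E] [TopologicalSpace E] [IsTopologicalAddGroup E]

/-- The functional `z ↦ ℓ (z.2 - z.1)` on pairs, whose zero set is the move hyperplane of a move
along the kernel of `ℓ`. -/
def displacementForm (ℓ : E →L[ℝ] ℝ) : E × E →ᴬ[ℝ] ℝ :=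
  (ℓ.comp (.snd ℝ E E - .fst ℝ E E)).toContinuousAffineMap

/-- The configurations of two labelled pieces in `U` that do not attack each other, where the moves
are along the kernels of the functionals `ℓ i`. -/
def nonattackingPairs (ℓ : ι → E →L[ℝ] ℝ) (U : Set E) : Set (E × E) :=
  arrangementComplement (fun i => displacementForm (ℓ i)) (U ×ˢ U)

variable {ℓ : ι → E →L[ℝ] ℝ} {U : Set E}

theorem mem_nonattackingPairs {z : E × E} :
    z ∈ nonattackingPairs ℓ U ↔ (z.1 ∈ U ∧ z.2 ∈ U) ∧ ∀ i, ℓ i (z.2 - z.1) ≠ 0 :=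
  Iff.rfl

theorem swap_mem_nonattackingPairs {z : E × E} (hz : z ∈ nonattackingPairs ℓ U) :
    z.swap ∈ nonattackingPairs ℓ U := by
  rw [mem_nonattackingPairs] at hz ⊢
  refine ⟨hz.1.symm, fun i => ?_⟩
  rw [Prod.fst_swap, Prod.snd_swap, ← neg_sub, map_neg]
  exact neg_ne_zero.2 (hz.2 i)

variable [ContinuousSMul ℝ E]

theorem connectedComponentIn_nonattackingPairs_eq_iff (hU : Convex ℝ U) {z w : E × E}
    (hz : z ∈ nonattackingPairs ℓ U) (hw : w ∈ nonattackingPairs ℓ U) :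
    connectedComponentIn (nonattackingPairs ℓ U) z =
      connectedComponentIn (nonattackingPairs ℓ U) w ↔
        signVector ℓ (z.2 - z.1) = signVector ℓ (w.2 - w.1) :=
  connectedComponentIn_eq_iff_signVector_eq (hU.prod hU) hz hw

theorem exists_pos_add_smul_mem {x : E} (hU : U ∈ 𝓝 x) (w : E) :
    ∃ δ > (0 : ℝ), x + δ • w ∈ U := by
  have hcont : ContinuousAt (fun δ : ℝ => x + δ • w) 0 := by fun_prop
  have hev : ∀ᶠ δ in 𝓝[>] (0 : ℝ), x + δ • w ∈ U :=
    (hcont.eventually_mem (by simpa using hU)).filter_mono nhdsWithin_le_nhds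
  obtain ⟨δ, hmem, hδ⟩ := (hev.and self_mem_nhdsWithin).exists
  exact ⟨δ, hδ, hmem⟩

theorem image_signVector_sub_nonattackingPairs (hU : (interior U).Nonempty) :
    (fun z => signVector ℓ (z.2 - z.1)) '' nonattackingPairs ℓ U =
      signVector ℓ '' arrangementComplement ℓ univ := by
  refine Subset.antisymm ?_ ?_
  · rintro _ ⟨z, hz, rfl⟩
    exact ⟨z.2 - z.1, ⟨mem_univ _, hz.2⟩, rfl⟩
  · rintro _ ⟨w, hw, rfl⟩
    obtain ⟨x, hx⟩ := hU
    obtain ⟨δ, hδ, hmem⟩ := exists_pos_add_smul_mem (mem_interior_iff_mem_nhds.1 hx) w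
    refine ⟨(x, x + δ • w), mem_nonattackingPairs.2 ⟨⟨interior_subset hx, hmem⟩, fun i => ?_⟩, ?_⟩
    · simpa using ⟨hδ.ne', hw.2 i⟩
    · simp only [add_sub_cancel_left, signVector_smul_of_pos ℓ hδ]

theorem ncard_components_nonattackingPairs (hU : Convex ℝ U) (hint : (interior U).Nonempty) :
    (connectedComponentIn (nonattackingPairs ℓ U) '' nonattackingPairs ℓ U).ncard =
      (signVector ℓ '' arrangementComplement ℓ univ).ncard := by
  rw [← image_signVector_sub_nonattackingPairs hint]
  exact ncard_image_eq_ncard_image_of_eq_iff_eq fun z hz w hw =>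
    connectedComponentIn_nonattackingPairs_eq_iff hU hz hw

theorem ncard_swapOrbits_nonattackingPairs (hU : Convex ℝ U) (hint : (interior U).Nonempty) :
    ((fun z => ({connectedComponentIn (nonattackingPairs ℓ U) z,
        connectedComponentIn (nonattackingPairs ℓ U) z.swap} : Set (Set (E × E)))) ''
          nonattackingPairs ℓ U).ncard =
      ((fun σ => ({σ, -σ} : Set (ι → SignType))) ''
        (signVector ℓ '' arrangementComplement ℓ univ)).ncard := by
  have hswap (z : E × E) :
      signVector ℓ (z.swap.2 - z.swap.1) = -signVector ℓ (z.2 - z.1) := by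
    rw [← signVector_neg, neg_sub, Prod.snd_swap, Prod.fst_swap]
  rw [← image_signVector_sub_nonattackingPairs hint, image_image]
  refine ncard_image_eq_ncard_image_of_eq_iff_eq fun z hz w hw => ?_
  have hz' := swap_mem_nonattackingPairs hz
  have hw' := swap_mem_nonattackingPairs hw
  simp only [pair_eq_pair_iff, connectedComponentIn_nonattackingPairs_eq_iff hU, hz, hw, hz', hw',
    hswap]

end NonattackingPairs

section SignVectorsOfLines

open Set SignType Filter Topology Function
open scoped Pointwise

theorem exists_signVector_add_smul_eq_update {ι E : Type*} [Finite ι] [DecidableEq ι]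
    [AddCommGroup E] [Module ℝ E] [TopologicalSpace E] [IsTopologicalAddGroup E]
    [ContinuousSMul ℝ E] {ℓ : ι → E →L[ℝ] ℝ} {x u : E} {a : ι} (hx : ℓ a x = 0)
    (hxne : ∀ i ≠ a, ℓ i x ≠ 0) (hu : 0 < ℓ a u) :
    ∃ ε : ℝ, signVector ℓ (x + ε • u) = update (signVector ℓ x) a 1 := by
  have hev (i : ι) :
      ∀ᶠ ε in 𝓝[>] (0 : ℝ), sign (ℓ i (x + ε • u)) = update (signVector ℓ x) a 1 i := by
    obtain rfl | hi := eq_or_ne i a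
    · filter_upwards [self_mem_nhdsWithin] with ε (hε : 0 < ε)
      rw [update_self, map_add, hx, zero_add, map_smul, smul_eq_mul, sign_pos (mul_pos hε hu)]
    · rw [update_of_ne hi]
      have hcont : ContinuousAt (fun ε : ℝ => sign (ℓ i (x + ε • u))) 0 :=
        ContinuousAt.comp (continuousAt_sign_of_ne_zero (by simpa using hxne i hi)) (by fun_prop)
      have hnear := hcont.eventually_mem (mem_nhds_discrete.2 (mem_singleton _))
      simpa [signVector] using hnear.filter_mono nhdsWithin_le_nhds
  obtain ⟨ε, hε⟩ := (eventually_all.2 hev).exists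
  exact ⟨ε, funext hε⟩

/-- The functional `w ↦ w · v^⊥` on the plane, where `v^⊥ = (v.2, -v.1)`; for `v ≠ 0` its kernel
is the line spanned by `v`. -/
noncomputable def moveForm (v : ℝ × ℝ) : ℝ × ℝ →L[ℝ] ℝ :=
  v.2 • .fst ℝ ℝ ℝ - v.1 • .snd ℝ ℝ ℝ

theorem moveForm_apply (v w : ℝ × ℝ) : moveForm v w = w.1 * v.2 - w.2 * v.1 := by
  simp [moveForm, mul_comm]

theorem moveForm_self (v : ℝ × ℝ) : moveForm v v = 0 := by
  rw [moveForm_apply]; ring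

theorem moveForm_swap (v w : ℝ × ℝ) : moveForm v w = -moveForm w v := by
  simp only [moveForm_apply]; ring

theorem exists_moveForm_pos {v : ℝ × ℝ} (hv : v ≠ 0) : ∃ u, 0 < moveForm v u := by
  have hsq : v.1 * v.1 + v.2 * v.2 ≠ 0 := fun h =>
    hv (Prod.ext_iff.2 (mul_self_add_mul_self_eq_zero.1 h))
  refine ⟨(v.2, -v.1), ?_⟩
  calc 0 < v.1 * v.1 + v.2 * v.2 :=
        (add_nonneg (mul_self_nonneg _) (mul_self_nonneg _)).lt_of_ne hsq.symm
    _ = moveForm v (v.2, -v.1) := by rw [moveForm_apply]; ring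

theorem moveForm_mul_moveForm_eq_sub (a b u w : ℝ × ℝ) :
    moveForm w u * moveForm b a = moveForm a u * moveForm b w - moveForm b u * moveForm a w := by
  simp only [moveForm_apply]; ring

variable {ι : Type*} {v : ι → ℝ × ℝ}

/-- The sign vector, with respect to the lines spanned by the vectors `v i`, of the sector that
contains the slight rotations of `v a` towards the positive side of its own line. -/
noncomputable def sectorSigns [DecidableEq ι] (v : ι → ℝ × ℝ) (a : ι) : ι → SignType :=
  update (signVector (fun i => moveForm (v i)) (v a)) a 1

variable [DecidableEq ι]

theorem sectorSigns_self (v : ι → ℝ × ℝ) (a : ι) : sectorSigns v a a = 1 :=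
  update_self ..

theorem sectorSigns_of_ne (v : ι → ℝ × ℝ) {a b : ι} (h : b ≠ a) :
    sectorSigns v a b = sign (moveForm (v b) (v a)) :=
  update_of_ne h ..

theorem sectorSigns_swap (v : ι → ℝ × ℝ) {a b : ι} (h : a ≠ b) :
    sectorSigns v a b = -sectorSigns v b a := by
  rw [sectorSigns_of_ne v h.symm, sectorSigns_of_ne v h, moveForm_swap, Left.sign_neg]

theorem sectorSigns_injective (v : ι → ℝ × ℝ) : Injective (sectorSigns v) := by
  intro a b hab
  by_contra hne
  have hswap := sectorSigns_swap v hne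
  rw [hab, sectorSigns_self, ← hab, sectorSigns_self] at hswap
  exact absurd hswap (by decide)

theorem sectorSigns_ne_neg (v : ι → ℝ × ℝ) (a b : ι) : sectorSigns v a ≠ -sectorSigns v b := by
  intro hab
  obtain rfl | hne := eq_or_ne a b
  · have haa := congrFun hab a
    rw [Pi.neg_apply, sectorSigns_self] at haa
    exact absurd haa (by decide)
  · have hswap := sectorSigns_swap v hne
    rw [← Pi.neg_apply (sectorSigns v b), ← hab, sectorSigns_self, hab, Pi.neg_apply,
      sectorSigns_self] at hswap
    exact absurd hswap (by decide)

theorem sectorSigns_ne_zero (hpar : Pairwise fun i j => moveForm (v i) (v j) ≠ 0) (a i : ι) :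
    sectorSigns v a i ≠ 0 := by
  obtain rfl | hi := eq_or_ne i a
  · rw [sectorSigns_self]
    exact one_ne_zero
  · rw [sectorSigns_of_ne v hi]
    exact sign_ne_zero.2 (hpar hi)

theorem disjoint_range_sectorSigns_neg (v : ι → ℝ × ℝ) :
    Disjoint (range (sectorSigns v)) (-range (sectorSigns v)) := by
  refine disjoint_left.2 ?_
  rintro _ ⟨a, rfl⟩ ⟨b, hb⟩
  exact sectorSigns_ne_neg v b a hb

theorem exists_signVector_eq_sectorSigns [Finite ι]
    (hpar : Pairwise fun i j => moveForm (v i) (v j) ≠ 0) {a : ι} (ha : v a ≠ 0) :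
    ∃ w, signVector (fun i => moveForm (v i)) w = sectorSigns v a := by
  obtain ⟨u, hu⟩ := exists_moveForm_pos ha
  obtain ⟨ε, hε⟩ := exists_signVector_add_smul_eq_update (ℓ := fun i => moveForm (v i))
    (moveForm_self (v a)) (fun i hi => hpar hi) hu
  exact ⟨_, hε⟩

theorem exists_sectorSigns_eq_sign_mul_sign [Finite ι] [Nonempty ι]
    (hpar : Pairwise fun i j => moveForm (v i) (v j) ≠ 0) {w : ℝ × ℝ}
    (hw : ∀ i, moveForm (v i) w ≠ 0) :
    ∃ a, ∀ i, sectorSigns v a i = sign (moveForm (v a) w) * sign (moveForm (v i) w) := by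
  have hw0 : w ≠ 0 := by
    rintro rfl
    exact hw (Classical.arbitrary ι) (map_zero _)
  obtain ⟨u, hu⟩ := exists_moveForm_pos hw0
  let cot (i : ι) : ℝ := moveForm (v i) u / moveForm (v i) w
  obtain ⟨a, hmax⟩ := Finite.exists_max cot
  refine ⟨a, fun i => ?_⟩
  rw [← sign_mul]
  obtain rfl | hi := eq_or_ne i a
  · rw [sectorSigns_self, sign_pos (mul_self_pos.2 (hw i))]
  have hfactor : moveForm w u * moveForm (v i) (v a) =
      (cot a - cot i) * (moveForm (v a) w * moveForm (v i) w) := by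
    have hwa := hw a
    have hwi := hw i
    rw [moveForm_mul_moveForm_eq_sub]
    simp only [cot]
    field_simp
  have hcot : 0 < cot a - cot i := by
    refine lt_of_le_of_ne (sub_nonneg.2 (hmax i)) fun h0 => ?_
    rw [← h0, zero_mul] at hfactor
    exact mul_ne_zero hu.ne' (hpar hi) hfactor
  have hsign := congrArg sign hfactor
  rwa [sign_mul, sign_mul, sign_pos hu, sign_pos hcot, one_mul, one_mul,
    ← sectorSigns_of_ne v hi] at hsign

theorem image_signVector_moveForm [Finite ι] [Nonempty ι] (hv : ∀ i, v i ≠ 0)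
    (hpar : Pairwise fun i j => moveForm (v i) (v j) ≠ 0) :
    signVector (fun i => moveForm (v i)) '' arrangementComplement (fun i => moveForm (v i)) univ =
      range (sectorSigns v) ∪ -range (sectorSigns v) := by
  have hrange : range (sectorSigns v) ⊆ signVector (fun i => moveForm (v i)) ''
      arrangementComplement (fun i => moveForm (v i)) univ := by
    rintro _ ⟨a, rfl⟩
    obtain ⟨w, hw⟩ := exists_signVector_eq_sectorSigns hpar (hv a)
    exact ⟨w, mem_arrangementComplement_univ_iff.2 (hw ▸ sectorSigns_ne_zero hpar a), hw⟩
  refine Subset.antisymm ?_ (union_subset hrange fun σ hσ => ?_)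
  · rintro _ ⟨w, hw, rfl⟩
    obtain ⟨a, ha⟩ := exists_sectorSigns_eq_sign_mul_sign hpar hw.2
    obtain hneg | hpos := (hw.2 a).lt_or_gt
    · exact .inr ⟨a, funext fun i => by rw [ha, sign_neg hneg, neg_one_mul]; rfl⟩
    · exact .inl ⟨a, funext fun i => by rw [ha, sign_pos hpos, one_mul]; rfl⟩
  · obtain ⟨w, hw, hwσ⟩ := hrange hσ
    exact ⟨-w, neg_mem_arrangementComplement_univ hw, by rw [signVector_neg, hwσ, neg_neg]⟩

end SignVectorsOfLines

theorem stmt_12_general {ι : Type*} [Finite ι] [Nonempty ι] {v : ι → ℝ × ℝ} (hv : ∀ i, v i ≠ 0)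
    (hpar : Pairwise fun i j => (v i).1 * (v j).2 - (v i).2 * (v j).1 ≠ 0)
    {U : Set (ℝ × ℝ)} (hU : Convex ℝ U) (hint : (interior U).Nonempty)
    {Ω : Set ((ℝ × ℝ) × (ℝ × ℝ))}
    (hΩ : Ω = {z : (ℝ × ℝ) × (ℝ × ℝ) | z.1 ∈ U ∧ z.2 ∈ U ∧
      ∀ i, (z.2.1 - z.1.1) * (v i).2 - (z.2.2 - z.1.2) * (v i).1 ≠ 0}) :
    IsConnected U ∧
    Set.ncard {C : Set ((ℝ × ℝ) × (ℝ × ℝ)) | ∃ z ∈ Ω, C = connectedComponentIn Ω z}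
      = 2 * Nat.card ι ∧
    Set.ncard {O : Set (Set ((ℝ × ℝ) × (ℝ × ℝ))) | ∃ z ∈ Ω,
        O = {C : Set ((ℝ × ℝ) × (ℝ × ℝ)) | C = connectedComponentIn Ω z ∨
          C = connectedComponentIn Ω (z.2, z.1)}}
      = Nat.card ι := by
  classical
  have hpar' : Pairwise fun i j => moveForm (v i) (v j) ≠ 0 := fun i j hij => by
    simpa only [moveForm_apply, mul_comm] using hpar hij.symm
  have hΩ' : Ω = nonattackingPairs (fun i => moveForm (v i)) U := by
    ext z
    simp only [hΩ, mem_nonattackingPairs, moveForm_apply, Set.mem_ofPred_eq, Prod.fst_sub,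
      Prod.snd_sub, and_assoc]
  have hsigns := image_signVector_moveForm hv hpar'
  have hdisj := disjoint_range_sectorSigns_neg v
  have hcard := Set.ncard_range_of_injective (sectorSigns_injective v)
  refine ⟨hU.isConnected (hint.mono interior_subset), ?_, ?_⟩
  · have hcomponents := ncard_components_nonattackingPairs (ℓ := fun i => moveForm (v i)) hU hint
    rw [hsigns, ncard_union_neg hdisj (Set.finite_range _), hcard, ← hΩ'] at hcomponents
    simpa only [Set.image, eq_comm] using hcomponents
  · have horbits := ncard_swapOrbits_nonattackingPairs (ℓ := fun i => moveForm (v i)) hU hint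
    rw [hsigns, ncard_image_pair_neg_union_neg hdisj, hcard, ← hΩ'] at horbits
    rw [← horbits]
    congr 1 with O
    exact exists_congr fun z => and_congr_right' eq_comm

/-- for one piece the number of nonattacking configuration types is `1`
(`B°` is connected); for two pieces the complement of the move hyperplanes in `(B°)²` has
exactly `2|M|` connected components, hence `|M|` unlabelled types. -/
theorem stmt_12
    (M : Finset (ℤ × ℤ)) (hMne : M.Nonempty)
    (hMmove : ∀ m ∈ M, m ≠ 0 ∧ Int.gcd m.1 m.2 = 1)
    (hMpar : ∀ m ∈ M, ∀ m' ∈ M, m ≠ m' → m.1 * m'.2 - m.2 * m'.1 ≠ 0)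
    (V : Finset (ℝ × ℝ)) (hV : ∀ v ∈ V, ∃ a b : ℚ, v = ((a : ℝ), (b : ℝ)))
    (B : Set (ℝ × ℝ)) (hB : B = convexHull ℝ (V : Set (ℝ × ℝ)))
    (hBint : (interior B).Nonempty)
    (Ω : Set ((ℝ × ℝ) × (ℝ × ℝ)))
    (hΩ : Ω = {z : (ℝ × ℝ) × (ℝ × ℝ) | z.1 ∈ interior B ∧ z.2 ∈ interior B ∧
      ∀ m ∈ M, (z.2.1 - z.1.1) * (m.2 : ℝ) - (z.2.2 - z.1.2) * (m.1 : ℝ) ≠ 0}) :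
    -- q = 1: the board interior is connected:
    IsConnected (interior B) ∧
    -- q = 2: there are 2|M| components:
    Set.ncard {C : Set ((ℝ × ℝ) × (ℝ × ℝ)) | ∃ z ∈ Ω, C = connectedComponentIn Ω z}
      = 2 * M.card ∧
    -- and |M| orbits under the coordinate swap, i.e. |M| unlabelled types:
    Set.ncard {O : Set (Set ((ℝ × ℝ) × (ℝ × ℝ))) | ∃ z ∈ Ω,
        O = {C : Set ((ℝ × ℝ) × (ℝ × ℝ)) | C = connectedComponentIn Ω z ∨
          C = connectedComponentIn Ω (z.2, z.1)}}
      = M.card := by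
  have : Nonempty M := hMne.to_subtype
  have hBconv : Convex ℝ (interior B) := hB ▸ (convex_convexHull ℝ _).interior
  have hne (m : M) : ((m.1.1 : ℝ), (m.1.2 : ℝ)) ≠ 0 := by
    simpa [Prod.ext_iff] using (hMmove m m.2).1
  have hpar : Pairwise fun m m' : M => (m.1.1 : ℝ) * m'.1.2 - m.1.2 * m'.1.1 ≠ 0 :=
    fun m m' h => mod_cast hMpar m m.2 m' m'.2 (Subtype.coe_ne_coe.2 h)
  simpa using stmt_12_general hne hpar hBconv (by simpa using hBint) (by simpa using hΩ)
end

section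
/- For every integer n ≥ 0, the number of 2-element subsets {(x_1,y_1), (x_2,y_2)} of {1, …, n}² satisfying x_1 ≠ x_2, y_1 ≠ y_2, x_1 + y_1 ≠ x_2 + y_2, and x_1 − y_1 ≠ x_2 − y_2 equals n⁴/2 − 5n³/3 + 3n²/2 − n/3, i.e. (3n⁴ − 10n³ + 9n² − 2n)/6. -/
/-!
Two distinct squares lie on at most one common line of the four queen directions. Hence the identity
`[nonattacking] + [column] + [row] + [antidiagonal] + [diagonal] = 1 + 3 [z = w]` of indicators,
summed over all ordered pairs `(z, w)` of squares, reduces the count to that of the pairs on a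
common line. On a product board `s ×ˢ t` the pairs on a common antidiagonal are counted by the
additive energy `E[s, t]`, and so are those on a common diagonal, because `a - b = a' - b'` iff
`a + b' = a' + b`. For intervals of lengths `m ≤ n` the energy is the sum of `n - |a - a'|` over
`1 ≤ a, a' ≤ m`.
-/

open Finset
open scoped Combinatorics.Additive

theorem pair_eq_iff_mem_offDiag {α : Type*} [DecidableEq α] {S : Finset α} (hS : #S = 2)
    (p : α × α) : {p.1, p.2} = S ↔ p ∈ S.offDiag := by
  rw [mem_offDiag]
  constructor
  · rintro rfl
    exact ⟨by simp, by simp, card_pair_eq_two_iff.1 hS⟩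
  · rintro ⟨hfst, hsnd, hne⟩
    exact eq_of_subset_of_card_le (by simp [insert_subset_iff, hfst, hsnd])
      (by rw [hS, card_pair hne])

theorem two_mul_ncard_card_eq_two_pairwise {α : Type*} (s : Finset α) (r : α → α → Prop)
    [Std.Symm r] [DecidableRel r] :
    2 * {S : Finset α | #S = 2 ∧ S ⊆ s ∧ (S : Set α).Pairwise r}.ncard =
      #{p ∈ s.offDiag | r p.1 p.2} := by
  classical
  let orderedPairs : Finset (α × α) := {p ∈ s.offDiag | r p.1 p.2}
  let pairs : Finset (Finset α) := (s.powersetCard 2).filter fun S ↦ (S : Set α).Pairwise r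
  have coe_pairs : {S : Finset α | #S = 2 ∧ S ⊆ s ∧ (S : Set α).Pairwise r} = pairs := by
    ext S
    simp only [pairs, Set.mem_ofPred_eq, mem_coe, mem_filter, mem_powersetCard]
    tauto
  have mapsTo : Set.MapsTo (fun p : α × α ↦ ({p.1, p.2} : Finset α)) orderedPairs pairs := by
    rintro ⟨a, b⟩ hp
    simp only [orderedPairs, mem_coe, mem_filter, mem_offDiag] at hp
    obtain ⟨⟨ha, hb, hab⟩, hr⟩ := hp
    rw [← coe_pairs]
    refine ⟨card_pair hab, by simp [insert_subset_iff, ha, hb], ?_⟩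
    rw [coe_pair, Set.pairwise_pair_of_symm]
    exact fun _ ↦ hr
  have card_fiber : ∀ S ∈ pairs, #{p ∈ orderedPairs | {p.1, p.2} = S} = 2 := by
    intro S hS
    simp only [pairs, mem_filter, mem_powersetCard] at hS
    obtain ⟨⟨hs, hcard⟩, hr⟩ := hS
    have fiber_eq : {p ∈ orderedPairs | {p.1, p.2} = S} = S.offDiag := by
      ext p
      rw [mem_filter, pair_eq_iff_mem_offDiag hcard, mem_filter, and_iff_right_iff_imp]
      intro hp
      have ⟨hfst, hsnd, hne⟩ := mem_offDiag.1 hp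
      exact ⟨offDiag_mono hs hp, hr hfst hsnd hne⟩
    rw [fiber_eq, offDiag_card, hcard]
  rw [coe_pairs, Set.ncard_coe_finset, mul_comm, ← sum_const_nat card_fiber,
    ← card_eq_sum_card_fiberwise mapsTo]

theorem card_filter_fst_eq_fst {α β : Type*} [DecidableEq α] (s : Finset α) (t : Finset β) :
    #{p ∈ (s ×ˢ t) ×ˢ s ×ˢ t | p.1.1 = p.2.1} = #s * #t ^ 2 := by
  rw [sq, ← diag_card s, diag_eq_filter, ← card_product, ← card_product, ← filter_product_left]
  exact card_equiv (.prodProdProdComm _ _ _ _) (by simp [and_and_and_comm])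

theorem card_filter_snd_eq_snd {α β : Type*} [DecidableEq β] (s : Finset α) (t : Finset β) :
    #{p ∈ (s ×ˢ t) ×ˢ s ×ˢ t | p.1.2 = p.2.2} = #s ^ 2 * #t := by
  rw [sq, ← diag_card t, diag_eq_filter, ← card_product, ← card_product, ← filter_product_right]
  exact card_equiv (.prodProdProdComm _ _ _ _) (by simp [and_and_and_comm])

section Queens

variable {G : Type*} [AddCommGroup G]

/-- Two points are nonattacking for the queen when they lie on distinct lines of each of the four
directions `(0, 1)`, `(1, 0)`, `(1, -1)`, `(1, 1)`, in this order in the definition. -/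
def QueenNonattacking (z w : G × G) : Prop :=
  z.1 ≠ w.1 ∧ z.2 ≠ w.2 ∧ z.1 + z.2 ≠ w.1 + w.2 ∧ z.1 - z.2 ≠ w.1 - w.2

instance : Std.Symm (QueenNonattacking (G := G)) where
  symm _ _ h := ⟨h.1.symm, h.2.1.symm, h.2.2.1.symm, h.2.2.2.symm⟩

/-- The set counted by `u_Q(2; ·)` for an arbitrary finite board: the nonattacking placements of two
unlabelled queens. -/
def nonattackingQueenPairs (board : Finset (G × G)) : Set (Finset (G × G)) :=
  {S | #S = 2 ∧ S ⊆ board ∧ (S : Set (G × G)).Pairwise QueenNonattacking}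

variable [DecidableEq G]

instance : DecidableRel (QueenNonattacking (G := G)) :=
  fun _ _ ↦ inferInstanceAs (Decidable (_ ∧ _))

theorem card_filter_sub_eq_sub (s t : Finset G) :
    #{p ∈ (s ×ˢ t) ×ˢ s ×ˢ t | p.1.1 - p.1.2 = p.2.1 - p.2.2} = E[s, t] := by
  rw [addEnergy_eq_card_filter]
  refine card_nbij' (fun p ↦ ((p.1.1, p.2.2), p.2.1, p.1.2))
    (fun p ↦ ((p.1.1, p.2.2), p.2.1, p.1.2)) ?_ ?_ (fun _ _ ↦ rfl) (fun _ _ ↦ rfl)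
  all_goals
    simp only [Set.MapsTo, coe_filter, mem_product, Set.mem_ofPred_eq, sub_eq_sub_iff_add_eq_add]
    tauto

theorem queenNonattacking_indicator_identity (h2 : IsSMulRegular G 2) (z w : G × G) :
    (if QueenNonattacking z w then 1 else 0) + (if z.1 = w.1 then 1 else 0)
      + (if z.2 = w.2 then 1 else 0) + (if z.1 + z.2 = w.1 + w.2 then 1 else 0)
      + (if z.1 - z.2 = w.1 - w.2 then 1 else 0) = 1 + 3 * (if z = w then 1 else 0) := by
  obtain ⟨a, b⟩ := z
  obtain ⟨c, d⟩ := w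
  have fst_eq (hadd : a + b = c + d) (hsub : a - b = c - d) : a = c :=
    h2 <| calc
      2 • a = a + b + (a - b) := by abel
      _ = c + d + (c - d) := by rw [hadd, hsub]
      _ = 2 • c := by abel
  simp only [QueenNonattacking, Prod.mk.injEq]
  by_cases hfst : a = c
  · subst hfst
    by_cases hsnd : b = d <;> simp [hsnd]
  by_cases hsnd : b = d
  · subst hsnd
    simp [hfst]
  by_cases hadd : a + b = c + d
  · have hsub : a - b ≠ c - d := fun hsub ↦ hfst (fst_eq hadd hsub)
    simp [hfst, hsnd, hadd, hsub]
  by_cases hsub : a - b = c - d <;> simp [hfst, hsnd, hadd, hsub]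

theorem card_filter_queenNonattacking (h2 : IsSMulRegular G 2) (s t : Finset G) :
    #{p ∈ (s ×ˢ t) ×ˢ s ×ˢ t | QueenNonattacking p.1 p.2} + #s * #t ^ 2 + #s ^ 2 * #t
      + 2 * E[s, t] = (#s * #t) ^ 2 + 3 * (#s * #t) := by
  have sum_identity := sum_congr (rfl : (s ×ˢ t) ×ˢ s ×ˢ t = _) fun p _ ↦
    queenNonattacking_indicator_identity h2 p.1 p.2
  simp only [sum_add_distrib, ← mul_sum, ← card_filter, ← card_eq_sum_ones] at sum_identity
  rw [card_filter_fst_eq_fst, card_filter_snd_eq_snd, card_filter_sub_eq_sub,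
    ← addEnergy_eq_card_filter, ← diag_eq_filter, diag_card, card_product,
    card_product] at sum_identity
  linarith

theorem two_mul_ncard_nonattackingQueenPairs (h2 : IsSMulRegular G 2) (s t : Finset G) :
    2 * (nonattackingQueenPairs (s ×ˢ t)).ncard + #s * #t ^ 2 + #s ^ 2 * #t + 2 * E[s, t] =
      (#s * #t) ^ 2 + 3 * (#s * #t) := by
  have filter_eq : {p ∈ (s ×ˢ t).offDiag | QueenNonattacking p.1 p.2} =
      {p ∈ (s ×ˢ t) ×ˢ s ×ˢ t | QueenNonattacking p.1 p.2} := by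
    grind [QueenNonattacking]
  rw [nonattackingQueenPairs, two_mul_ncard_card_eq_two_pairwise, filter_eq,
    card_filter_queenNonattacking h2]

end Queens

theorem sum_Icc_one_natCast_add_one {M : Type*} [AddCommMonoid M] (f : ℤ → M) (n : ℕ) :
    ∑ a ∈ Icc 1 ((n + 1 : ℕ) : ℤ), f a = ∑ a ∈ Icc 1 (n : ℤ), f a + f (n + 1) := by
  rw [Nat.cast_succ, ← insert_Icc_right_eq_Icc_add_one (by omega), sum_insert (by simp), add_comm]

theorem two_mul_sum_Icc_one_natCast (n : ℕ) : 2 * ∑ a ∈ Icc 1 (n : ℤ), a = n * (n + 1) := by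
  induction n with
  | zero => simp
  | succ n ih => rw [sum_Icc_one_natCast_add_one, mul_add, ih]; push_cast; ring

theorem two_mul_sum_Icc_abs_sub_add_one (n : ℕ) :
    2 * ∑ a ∈ Icc 1 (n : ℤ), |a - (n + 1)| = n * (n + 1) := by
  have abs_eq : ∀ a ∈ Icc 1 (n : ℤ), |a - (n + 1)| = (n + 1) - a := by
    intro a ha
    rw [mem_Icc] at ha
    rw [abs_of_neg (by omega), neg_sub]
  rw [sum_congr rfl abs_eq, sum_sub_distrib, mul_sub, two_mul_sum_Icc_one_natCast]
  simp only [sum_const, Int.card_Icc, add_sub_cancel_right, Int.toNat_natCast, nsmul_eq_mul]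
  ring

theorem three_mul_sum_Icc_abs_sub (n : ℕ) :
    3 * ∑ a ∈ Icc 1 (n : ℤ), ∑ b ∈ Icc 1 (n : ℤ), |a - b| = n ^ 3 - n := by
  induction n with
  | zero => simp
  | succ n ih =>
    simp only [sum_Icc_one_natCast_add_one, sum_add_distrib, sub_self, abs_zero]
    simp only [abs_sub_comm ((n : ℤ) + 1)]
    push_cast
    linear_combination ih + 3 * two_mul_sum_Icc_abs_sub_add_one n

theorem card_filter_add_eq_add_Icc {a b : ℤ} {n : ℕ} (h : |a - b| ≤ n) :
    (#{p ∈ Icc 1 (n : ℤ) ×ˢ Icc 1 (n : ℤ) | a + p.1 = b + p.2} : ℤ) = n - |a - b| := by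
  have eq_image : {p ∈ Icc 1 (n : ℤ) ×ˢ Icc 1 (n : ℤ) | a + p.1 = b + p.2} =
      (Icc (max 1 (1 + (b - a))) (min n (n + (b - a)))).image fun x ↦ (x, x + (a - b)) := by
    ext ⟨x, y⟩
    simp only [mem_filter, mem_product, mem_Icc, mem_image, Prod.mk.injEq, sup_le_iff, le_inf_iff]
    constructor
    · intro h
      exact ⟨x, by omega, rfl, by omega⟩
    · rintro ⟨x, h, rfl, rfl⟩
      omega
  rw [eq_image, card_image_of_injective _ fun x y h ↦ (Prod.mk.inj h).1, Int.card_Icc]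
  grind

theorem three_mul_addEnergy_Icc {m n : ℕ} (h : m ≤ n) :
    3 * (E[Icc 1 (m : ℤ), Icc 1 (n : ℤ)] : ℤ) = 3 * m ^ 2 * n - (m ^ 3 - m) := by
  have energy_eq_sum : (E[Icc 1 (m : ℤ), Icc 1 (n : ℤ)] : ℤ) =
      ∑ a ∈ Icc 1 (m : ℤ), ∑ b ∈ Icc 1 (m : ℤ), (n - |a - b|) := by
    rw [addEnergy, card_filter, sum_product, Nat.cast_sum, sum_product]
    refine sum_congr rfl fun a ha ↦ sum_congr rfl fun b hb ↦ ?_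
    rw [mem_Icc] at ha hb
    rw [← card_filter, card_filter_add_eq_add_Icc (abs_le.2 (by omega))]
  rw [energy_eq_sum, ← three_mul_sum_Icc_abs_sub]
  simp only [sum_sub_distrib, sum_const, Int.card_Icc, add_sub_cancel_right, Int.toNat_natCast,
    nsmul_eq_mul]
  ring

theorem stmt_14_general {m n : ℕ} (h : m ≤ n) :
    ((nonattackingQueenPairs (Icc 1 (m : ℤ) ×ˢ Icc 1 (n : ℤ))).ncard : ℚ) =
      m * (m - 1) * (3 * n ^ 2 - 9 * n + 2 * m + 2) / 6 := by
  have pairs := two_mul_ncard_nonattackingQueenPairs (nsmul_right_injective two_ne_zero)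
    (Icc 1 (m : ℤ)) (Icc 1 (n : ℤ))
  have energy := three_mul_addEnergy_Icc h
  simp only [Int.card_Icc, add_sub_cancel_right, Int.toNat_natCast] at pairs
  qify at pairs energy
  linear_combination pairs / 2 - energy / 3

/-- the number of nonattacking placements of two queens on the `n × n`
board is `(3n⁴ − 10n³ + 9n² − 2n)/6`. -/
theorem stmt_14 (n : ℕ) :
    (Set.ncard {S : Finset (ℤ × ℤ) |
      S.card = 2 ∧
      (∀ z ∈ S, 1 ≤ z.1 ∧ z.1 ≤ (n : ℤ) ∧ 1 ≤ z.2 ∧ z.2 ≤ (n : ℤ)) ∧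
      (∀ z ∈ S, ∀ w ∈ S, z ≠ w →
        z.1 ≠ w.1 ∧ z.2 ≠ w.2 ∧ z.1 + z.2 ≠ w.1 + w.2 ∧ z.1 - z.2 ≠ w.1 - w.2)} : ℚ)
      = (3 * (n : ℚ) ^ 4 - 10 * (n : ℚ) ^ 3 + 9 * (n : ℚ) ^ 2 - 2 * (n : ℚ)) / 6 := by
  refine .trans ?_ ((stmt_14_general (le_refl n)).trans (by ring))
  simp only [nonattackingQueenPairs, QueenNonattacking, Set.Pairwise, subset_iff, mem_product,
    mem_Icc, mem_coe, and_assoc]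
end

section
/- For each positive integer q, the bishops counting function u_B(q;n) on the square board is a quasipolynomial in n whose period divides 2^{q−1}: there exist polynomials f_0, …, f_{2^{q−1}−1} with rational coefficients, each of degree 2q, such that u_B(q;n) = f_{n mod 2^{q−1}}(n) for every integer n ≥ 0. -/
/-!
Bishops are rooks on a rotated board: diagonals `x - y` play the role of columns and antidiagonals
`x + y` the role of rows. The two colour classes do not interact. The diagonals of one colour,
listed by increasing length, meet increasing sets of antidiagonals, so each class is a Ferrers
board. Filling the columns of a Ferrers board from the shortest to the longest gives
`r (k + 1) (m + 1) = r (k + 1) m + (h m - k) * r k m` for the number `r k m` of placements of `k`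
rooks in the first `m` columns, where `h m` is the height of column `m`. If `h` is quasipolynomial
of period `p` and degree `d`, summation makes `r k` quasipolynomial of period `p` and degree
`(d + 1) * k`. Here `p = 2` and `d = 1`. Positivity of all leading coefficients prevents
cancellation in the top degree.
-/

open Finset Polynomial

section Polynomials

/-- Polynomials of exact degree `d` with positive leading coefficient. This class is closed under
nonempty sums, so it allows the degree of a sum to be computed exactly. -/
def IsPositiveOfDegree (d : ℕ) (f : ℚ[X]) : Prop :=
  f.natDegree = d ∧ 0 < f.leadingCoeff

variable {d e : ℕ} {f g : ℚ[X]}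

theorem isPositiveOfDegree_iff : IsPositiveOfDegree d f ↔ f.natDegree ≤ d ∧ 0 < f.coeff d := by
  constructor
  · rintro ⟨rfl, hf⟩
    exact ⟨le_rfl, hf⟩
  · rintro ⟨hd, hf⟩
    have hdeg : f.natDegree = d := natDegree_eq_of_le_of_coeff_ne_zero hd hf.ne'
    exact ⟨hdeg, by rwa [leadingCoeff, hdeg]⟩

namespace IsPositiveOfDegree

theorem degree_eq (hf : IsPositiveOfDegree d f) : f.degree = d := by
  rw [degree_eq_natDegree (leadingCoeff_ne_zero.mp hf.2.ne'), hf.1]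

theorem mul (hf : IsPositiveOfDegree d f) (hg : IsPositiveOfDegree e g) :
    IsPositiveOfDegree (d + e) (f * g) := by
  refine ⟨?_, leadingCoeff_mul f g ▸ mul_pos hf.2 hg.2⟩
  rw [natDegree_mul (leadingCoeff_ne_zero.mp hf.2.ne') (leadingCoeff_ne_zero.mp hg.2.ne'),
    hf.1, hg.1]

theorem sum {ι : Type*} {s : Finset ι} {f : ι → ℚ[X]} (hs : s.Nonempty)
    (hf : ∀ i ∈ s, IsPositiveOfDegree d (f i)) : IsPositiveOfDegree d (∑ i ∈ s, f i) := by
  simp only [isPositiveOfDegree_iff] at hf ⊢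
  refine ⟨natDegree_sum_le_of_forall_le s f fun i hi => (hf i hi).1, ?_⟩
  rw [finsetSum_coeff]
  exact sum_pos (fun i hi => (hf i hi).2) hs

theorem add_C (hf : IsPositiveOfDegree d f) (hd : 0 < d) (a : ℚ) :
    IsPositiveOfDegree d (f + C a) := by
  rw [isPositiveOfDegree_iff] at hf ⊢
  refine ⟨natDegree_add_le_of_degree_le hf.1 (by simp), ?_⟩
  rw [coeff_add, coeff_C_of_ne_zero hd.ne', add_zero]
  exact hf.2

theorem taylor (hf : IsPositiveOfDegree d f) (a : ℚ) :
    IsPositiveOfDegree d (Polynomial.taylor a f) :=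
  ⟨(natDegree_taylor f a).trans hf.1, (leadingCoeff_taylor a f).symm ▸ hf.2⟩

end IsPositiveOfDegree

/-- The rescaled Bernoulli polynomial `c ^ i * B_{i+1}(X / c) / (i + 1)`, whose forward difference
with step `c` is `X ^ i`. -/
noncomputable def powAntidifference (c : ℚ) (i : ℕ) : ℚ[X] :=
  C (c ^ i / (i + 1)) * (Polynomial.bernoulli (i + 1)).comp (C c⁻¹ * X)

theorem coeff_powAntidifference (c : ℚ) (i j : ℕ) :
    (powAntidifference c i).coeff j =
      c ^ i / (i + 1) * ((Polynomial.bernoulli (i + 1)).coeff j * c⁻¹ ^ j) := by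
  rw [powAntidifference, coeff_C_mul, comp_C_mul_X_coeff]

theorem coeff_powAntidifference_of_lt (c : ℚ) {i j : ℕ} (hij : i + 1 < j) :
    (powAntidifference c i).coeff j = 0 := by
  rw [coeff_powAntidifference, coeff_bernoulli, if_neg hij.not_ge, zero_mul, mul_zero]

theorem coeff_succ_powAntidifference_pos {c : ℚ} (hc : 0 < c) (i : ℕ) :
    0 < (powAntidifference c i).coeff (i + 1) := by
  rw [coeff_powAntidifference, coeff_bernoulli, if_pos le_rfl, Nat.sub_self, _root_.bernoulli_zero,
    Nat.choose_self]
  positivity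

theorem eval_add_powAntidifference {c : ℚ} (hc : c ≠ 0) (i : ℕ) (x : ℚ) :
    (powAntidifference c i).eval (x + c) = (powAntidifference c i).eval x + x ^ i := by
  have hi : (i : ℚ) + 1 ≠ 0 := by positivity
  have hx : c⁻¹ * (x + c) = 1 + c⁻¹ * x := by field_simp; ring
  simp only [powAntidifference, eval_mul, eval_C, eval_comp, eval_X, hx, bernoulli_eval_one_add,
    Nat.cast_add, Nat.cast_one, Nat.add_sub_cancel, mul_pow, inv_pow]
  field_simp

theorem IsPositiveOfDegree.exists_antidifference (hf : IsPositiveOfDegree d f) {c : ℚ}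
    (hc : 0 < c) :
    ∃ g, IsPositiveOfDegree (d + 1) g ∧ ∀ x, g.eval (x + c) = g.eval x + f.eval x := by
  rw [isPositiveOfDegree_iff] at hf
  have hcoeff : ∀ j, (∑ i ∈ range (d + 1), C (f.coeff i) * powAntidifference c i).coeff j =
      ∑ i ∈ range (d + 1), f.coeff i * (powAntidifference c i).coeff j := by
    simp only [finsetSum_coeff, coeff_C_mul, implies_true]
  refine ⟨∑ i ∈ range (d + 1), C (f.coeff i) * powAntidifference c i,
    isPositiveOfDegree_iff.mpr ⟨?_, ?_⟩, fun x => ?_⟩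
  · refine natDegree_le_iff_coeff_eq_zero.mpr fun j hj => (hcoeff j).trans ?_
    refine sum_eq_zero fun i hi => ?_
    rw [mem_range] at hi
    rw [coeff_powAntidifference_of_lt c (by lia), mul_zero]
  · rw [hcoeff, sum_range_succ, sum_eq_zero, zero_add]
    · exact mul_pos hf.2 (coeff_succ_powAntidifference_pos hc d)
    · intro i hi
      rw [mem_range] at hi
      rw [coeff_powAntidifference_of_lt c (by lia), mul_zero]
  · simp only [eval_finsetSum, eval_mul, eval_C, eval_add_powAntidifference hc.ne', mul_add,
      sum_add_distrib, eval_eq_sum_range' (Nat.lt_succ_of_le hf.1)]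

end Polynomials

section Quasipolynomials

/-- Quasipolynomials of period `p` all of whose constituents have degree `d` and a positive leading
coefficient. -/
def IsPosQuasipolynomial (p d : ℕ) (F : ℕ → ℚ) : Prop :=
  ∃ f : ℕ → ℚ[X], (∀ i, IsPositiveOfDegree d (f i)) ∧ ∀ n, F n = (f (n % p)).eval (n : ℚ)

namespace IsPosQuasipolynomial

variable {p d e : ℕ} {F G : ℕ → ℚ}

theorem of_dvd {p' : ℕ} (hF : IsPosQuasipolynomial p d F) (hp : p ∣ p') :
    IsPosQuasipolynomial p' d F := by
  obtain ⟨f, hf, hFf⟩ := hF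
  refine ⟨fun i => f (i % p), fun i => hf _, fun n => ?_⟩
  simp only [hFf, Nat.mod_mod_of_dvd n hp]

theorem one (p : ℕ) : IsPosQuasipolynomial p 0 fun _ => 1 :=
  ⟨fun _ => 1, fun _ => ⟨natDegree_one, by simp⟩, fun _ => eval_one.symm⟩

theorem mul (hF : IsPosQuasipolynomial p d F) (hG : IsPosQuasipolynomial p e G) :
    IsPosQuasipolynomial p (d + e) fun n => F n * G n := by
  obtain ⟨f, hf, hFf⟩ := hF
  obtain ⟨g, hg, hGg⟩ := hG
  exact ⟨fun i => f i * g i, fun i => (hf i).mul (hg i), fun n => by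
    simp only [hFf, hGg, eval_mul]⟩

theorem sum {ι : Type*} {s : Finset ι} {F : ι → ℕ → ℚ} (hs : s.Nonempty)
    (hF : ∀ a ∈ s, IsPosQuasipolynomial p d (F a)) :
    IsPosQuasipolynomial p d fun n => ∑ a ∈ s, F a n := by
  choose! f hf hFf using hF
  refine ⟨fun i => ∑ a ∈ s, f a i, fun i => .sum hs fun a ha => hf a ha i, fun n => ?_⟩
  rw [eval_finsetSum]
  exact sum_congr rfl fun a ha => hFf a ha n

theorem sub_const (hF : IsPosQuasipolynomial p d F) (hd : 0 < d) (a : ℚ) :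
    IsPosQuasipolynomial p d fun n => F n - a := by
  obtain ⟨f, hf, hFf⟩ := hF
  refine ⟨fun i => f i + C (-a), fun i => (hf i).add_C hd _, fun n => ?_⟩
  simp only [hFf, eval_add, eval_C, sub_eq_add_neg]

theorem comp_add_right (hF : IsPosQuasipolynomial p d F) (l : ℕ) :
    IsPosQuasipolynomial p d fun n => F (n + l) := by
  obtain ⟨f, hf, hFf⟩ := hF
  refine ⟨fun i => taylor (l : ℚ) (f ((i + l) % p)), fun i => (hf _).taylor _, fun n => ?_⟩
  simp only [hFf, taylor_eval, Nat.mod_add_mod, Nat.cast_add]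

theorem of_add_period (hp : 0 < p) (hG : IsPosQuasipolynomial p d G)
    (hFG : ∀ n, F (n + p) = F n + G n) : IsPosQuasipolynomial p (d + 1) F := by
  obtain ⟨g, hg, hGg⟩ := hG
  choose f hf hfg using fun i => (hg i).exists_antidifference (Nat.cast_pos.mpr hp)
  refine ⟨fun i => f i + C (F i - (f i).eval (i : ℚ)), fun i => (hf i).add_C d.succ_pos _,
    fun n => ?_⟩
  have hprogression : ∀ i < p, ∀ j,
      F (i + p * j) = (f i).eval ((i + p * j : ℕ) : ℚ) + (F i - (f i).eval (i : ℚ)) := by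
    intro i hi j
    induction j with
    | zero => simp
    | succ j ih =>
      have hmod : (i + p * j) % p = i := by rw [Nat.add_mul_mod_self_left, Nat.mod_eq_of_lt hi]
      rw [mul_add_one, ← add_assoc, hFG, hGg, hmod, ih, Nat.cast_add _ p, hfg]
      ring
  simpa only [Nat.mod_add_div, eval_add, eval_C] using hprogression _ (Nat.mod_lt n hp) (n / p)

theorem of_succ (hp : 0 < p) (hG : IsPosQuasipolynomial p d G)
    (hFG : ∀ n, F (n + 1) = F n + G n) : IsPosQuasipolynomial p (d + 1) F := by
  have htelescope : ∀ n l, F (n + l) = F n + ∑ i ∈ range l, G (n + i) := by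
    intro n l
    induction l with
    | zero => simp
    | succ l ih => rw [← add_assoc, hFG, ih, sum_range_succ, add_assoc]
  exact .of_add_period hp
    (.sum (nonempty_range_iff.mpr hp.ne') fun i _ => hG.comp_add_right i) (htelescope · p)

end IsPosQuasipolynomial

end Quasipolynomials

section RookNumbers

/-- The `k`-th rook number of the Ferrers board with column heights `h 0 ≤ ⋯ ≤ h (m - 1)`, through
its recursion on the columns; see `IsFerrers.card_placements_biUnion`. -/
def rookNumber (h : ℕ → ℚ) : ℕ → ℕ → ℚ
  | 0, _ => 1
  | _ + 1, 0 => 0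
  | k + 1, m + 1 => rookNumber h (k + 1) m + (h m - k) * rookNumber h k m

theorem isPosQuasipolynomial_rookNumber {p d : ℕ} {h : ℕ → ℚ} (hp : 0 < p) (hd : 0 < d)
    (hh : IsPosQuasipolynomial p d h) (k : ℕ) :
    IsPosQuasipolynomial p ((d + 1) * k) (rookNumber h k) := by
  induction k with
  | zero =>
    have hzero : rookNumber h 0 = fun _ => 1 := funext fun m => by rw [rookNumber]
    exact hzero ▸ .one p
  | succ k ih =>
    have hdeg : (d + 1) * (k + 1) = d + (d + 1) * k + 1 := by ring
    rw [hdeg]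
    exact .of_succ hp ((hh.sub_const hd k).mul ih) fun m => by rw [rookNumber]

end RookNumbers

section Placements

variable {α ρ γ : Type*} {row : α → ρ} {col : α → γ}

variable (row col) in
/-- Sets of cells no two of which share a row or a column, where `row` and `col` are arbitrary
labellings of the cells. -/
def IsNonattacking (S : Set α) : Prop :=
  Set.InjOn row S ∧ Set.InjOn col S

theorem IsNonattacking.mono {S T : Set α} (hT : IsNonattacking row col T) (hST : S ⊆ T) :
    IsNonattacking row col S :=
  ⟨hT.1.mono hST, hT.2.mono hST⟩

open Classical in
variable (row col) in
/-- The nonattacking placements of `k` pieces on the board `B`. -/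
noncomputable def placements (k : ℕ) (B : Finset α) : Finset (Finset α) :=
  {S ∈ B.powersetCard k | IsNonattacking row col S}

variable {k : ℕ} {A B C S : Finset α}

theorem mem_placements :
    S ∈ placements row col k B ↔ S ⊆ B ∧ #S = k ∧ IsNonattacking row col (S : Set α) := by
  classical
  rw [placements, mem_filter, mem_powersetCard, and_assoc]

theorem mem_placements_of_subset (hS : S ∈ placements row col k B) {T : Finset α} (hTS : T ⊆ S)
    (hTA : T ⊆ A) : T ∈ placements row col #T A :=
  mem_placements.mpr ⟨hTA, rfl, (mem_placements.mp hS).2.2.mono (coe_subset.mpr hTS)⟩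

theorem card_placements_zero : #(placements row col 0 B) = 1 := by
  refine card_eq_one.mpr ⟨∅, ?_⟩
  ext S
  rw [mem_placements, card_eq_zero, mem_singleton]
  refine ⟨fun h => h.2.1, ?_⟩
  rintro rfl
  simp [IsNonattacking]

theorem card_placements_one : #(placements row col 1 B) = #B := by
  classical
  have hplacements : placements row col 1 B = B.powersetCard 1 := by
    refine filter_true_of_mem fun S hS => ?_
    obtain ⟨x, rfl⟩ := card_eq_one.mp (mem_powersetCard.mp hS).2
    simp [IsNonattacking]
  rw [hplacements, card_powersetCard, Nat.choose_one_right]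

theorem placements_succ_empty : placements row col (k + 1) ∅ = ∅ := by
  classical
  rw [placements, powersetCard_eq_empty.mpr k.succ_pos, filter_empty]

theorem card_filter_row_notMem_image_add_card [DecidableEq ρ] (hC : Set.InjOn row (C : Set α))
    (hS : Set.InjOn row (S : Set α)) (hrow : row '' (S : Set α) ⊆ row '' (C : Set α)) :
    #{c ∈ C | row c ∉ S.image row} + #S = #C := by
  have himage : {c ∈ C | row c ∉ S.image row}.image row = C.image row \ S.image row := by
    rw [← filter_notMem_eq_sdiff, filter_image]
  rw [← coe_image, ← coe_image, coe_subset] at hrow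
  rw [← card_image_of_injOn (hC.mono (coe_subset.mpr (filter_subset _ _))), himage,
    ← card_image_of_injOn hS, card_sdiff_add_card_eq_card hrow, card_image_of_injOn hC]

variable (row col) in
/-- The sets `C 0, …, C (m - 1)` are the columns, in increasing order, of a Ferrers board. As the
order of the rows is irrelevant to rook placements, the shape is expressed by inclusion of the sets
of rows which the columns meet. -/
structure IsFerrers (C : ℕ → Finset α) (m : ℕ) : Prop where
  col_eq_iff : ∀ i < m, ∀ j < m, ∀ z ∈ C i, ∀ w ∈ C j, col z = col w ↔ i = j
  injOn_row : ∀ i < m, Set.InjOn row (C i : Set α)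
  image_row_subset : ∀ i j, i ≤ j → j < m →
    row '' (C i : Set α) ⊆ row '' (C j : Set α)

theorem IsFerrers.mono {C : ℕ → Finset α} {m m' : ℕ} (hC : IsFerrers row col C m) (hm : m' ≤ m) :
    IsFerrers row col C m' where
  col_eq_iff i hi j hj := hC.col_eq_iff i (hi.trans_le hm) j (hj.trans_le hm)
  injOn_row i hi := hC.injOn_row i (hi.trans_le hm)
  image_row_subset i j hij hj := hC.image_row_subset i j hij (hj.trans_le hm)

variable [DecidableEq α]

theorem union_inter_eq_left_of_disjoint {S T : Finset α} (hAB : Disjoint A B) (hS : S ⊆ A)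
    (hT : T ⊆ B) : (S ∪ T) ∩ A = S := by
  rw [union_inter_distrib_right, inter_eq_left.mpr hS,
    disjoint_iff_inter_eq_empty.mp (hAB.symm.mono_left hT), union_empty]

theorem union_inter_eq_right_of_disjoint {S T : Finset α} (hAB : Disjoint A B) (hS : S ⊆ A)
    (hT : T ⊆ B) : (S ∪ T) ∩ B = T := by
  rw [union_comm, union_inter_eq_left_of_disjoint hAB.symm hT hS]

theorem union_mem_placements {i j : ℕ} {S T : Finset α}
    (hAB : ∀ a ∈ A, ∀ b ∈ B, row a ≠ row b ∧ col a ≠ col b) (hS : S ∈ placements row col i A)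
    (hT : T ∈ placements row col j B) : S ∪ T ∈ placements row col (i + j) (A ∪ B) := by
  obtain ⟨hSA, rfl, hSrow, hScol⟩ := mem_placements.mp hS
  obtain ⟨hTB, rfl, hTrow, hTcol⟩ := mem_placements.mp hT
  have hST : Disjoint S T :=
    disjoint_left.mpr fun z hzS hzT => (hAB z (hSA hzS) z (hTB hzT)).1 rfl
  refine mem_placements.mpr ⟨union_subset_union hSA hTB, card_union_of_disjoint hST, ?_⟩
  rw [IsNonattacking, coe_union, Set.injOn_union (disjoint_coe.mpr hST),
    Set.injOn_union (disjoint_coe.mpr hST)]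
  exact ⟨⟨hSrow, hTrow, fun a ha b hb => (hAB a (hSA ha) b (hTB hb)).1⟩,
    hScol, hTcol, fun a ha b hb => (hAB a (hSA ha) b (hTB hb)).2⟩

theorem card_filter_placements_union (hAB : ∀ a ∈ A, ∀ b ∈ B, row a ≠ row b ∧ col a ≠ col b)
    (i j : ℕ) :
    #{S ∈ placements row col (i + j) (A ∪ B) | (#(S ∩ A), #(S ∩ B)) = (i, j)} =
      #(placements row col i A) * #(placements row col j B) := by
  have hdisj : Disjoint A B := disjoint_left.mpr fun z hA hB => (hAB z hA z hB).1 rfl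
  rw [← card_product]
  refine card_nbij' (fun S => (S ∩ A, S ∩ B)) (fun T => T.1 ∪ T.2) ?_ ?_ ?_ ?_
  · intro S hS
    obtain ⟨hS, hSij⟩ := mem_filter.mp hS
    obtain ⟨rfl, rfl⟩ := Prod.mk.inj hSij
    exact mem_product.mpr ⟨mem_placements_of_subset hS inter_subset_left inter_subset_right,
      mem_placements_of_subset hS inter_subset_left inter_subset_right⟩
  · rintro ⟨S, T⟩ hST
    obtain ⟨hS, hT⟩ := mem_product.mp hST
    obtain ⟨hSA, hSi, -⟩ := mem_placements.mp hS
    obtain ⟨hTB, hTj, -⟩ := mem_placements.mp hT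
    refine mem_filter.mpr ⟨union_mem_placements hAB hS hT, ?_⟩
    rw [union_inter_eq_left_of_disjoint hdisj hSA hTB,
      union_inter_eq_right_of_disjoint hdisj hSA hTB, hSi, hTj]
  · intro S hS
    obtain ⟨hSAB, -⟩ := mem_placements.mp (mem_filter.mp hS).1
    exact (inter_union_distrib_left S A B).symm.trans (inter_eq_left.mpr hSAB)
  · rintro ⟨S, T⟩ hST
    obtain ⟨hS, hT⟩ := mem_product.mp hST
    obtain ⟨hSA, -⟩ := mem_placements.mp hS
    obtain ⟨hTB, -⟩ := mem_placements.mp hT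
    exact Prod.ext (union_inter_eq_left_of_disjoint hdisj hSA hTB)
      (union_inter_eq_right_of_disjoint hdisj hSA hTB)

theorem card_placements_union (hAB : ∀ a ∈ A, ∀ b ∈ B, row a ≠ row b ∧ col a ≠ col b) (q : ℕ) :
    #(placements row col q (A ∪ B)) =
      ∑ x ∈ antidiagonal q, #(placements row col x.1 A) * #(placements row col x.2 B) := by
  have hdisj : Disjoint A B := disjoint_left.mpr fun z hA hB => (hAB z hA z hB).1 rfl
  rw [card_eq_sum_card_fiberwise (f := fun S => (#(S ∩ A), #(S ∩ B))) (t := antidiagonal q)]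
  · refine sum_congr rfl fun x hx => ?_
    rw [← card_filter_placements_union hAB, HasAntidiagonal.mem_antidiagonal.mp hx]
  · intro S hS
    obtain ⟨hSAB, hSq, -⟩ := mem_placements.mp hS
    rw [mem_coe, HasAntidiagonal.mem_antidiagonal,
      ← card_union_of_disjoint (hdisj.mono inter_subset_right inter_subset_right),
      ← inter_union_distrib_left, inter_eq_left.mpr hSAB, hSq]

theorem insert_mem_placements_iff {c : α} (hAC : ∀ a ∈ A, ∀ z ∈ C, col a ≠ col z) (hS : S ⊆ A)
    (hc : c ∈ C) :
    insert c S ∈ placements row col (k + 1) (A ∪ C) ↔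
      S ∈ placements row col k A ∧ row c ∉ row '' S := by
  have hcS : c ∉ S := fun h => hAC c (hS h) c hc rfl
  have hcol : col c ∉ col '' S := by
    rintro ⟨a, ha, hac⟩
    exact hAC a (hS ha) c hc hac
  have hsub : insert c S ⊆ A ∪ C :=
    insert_subset (mem_union_right A hc) (hS.trans subset_union_left)
  rw [mem_placements, mem_placements, card_insert_of_notMem hcS, IsNonattacking, IsNonattacking,
    coe_insert, Set.injOn_insert (mem_coe.not.mpr hcS), Set.injOn_insert (mem_coe.not.mpr hcS)]
  simp only [hsub, hS, hcol, Nat.add_right_cancel_iff, not_false_eq_true, and_true, true_and]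
  tauto

theorem exists_insert_eq_of_mem_placements {T : Finset α}
    (hC : ∀ z ∈ C, ∀ w ∈ C, col z = col w) (hT : T ∈ placements row col k (A ∪ C))
    (hTA : ¬T ⊆ A) : ∃ c ∈ C, ∃ S ⊆ A, insert c S = T := by
  obtain ⟨hTAC, -, -, hTcol⟩ := mem_placements.mp hT
  obtain ⟨c, hcT, hcA⟩ := not_subset.mp hTA
  have hcC : c ∈ C := (mem_union.mp (hTAC hcT)).resolve_left hcA
  refine ⟨c, hcC, T.erase c, fun z hz => ?_, insert_erase hcT⟩
  obtain ⟨hzc, hzT⟩ := mem_erase.mp hz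
  exact (mem_union.mp (hTAC hzT)).resolve_right fun hzC => hzc (hTcol hzT hcT (hC z hzC c hcC))

theorem card_filter_not_subset_placements_union [DecidableEq ρ]
    (hC : ∀ z ∈ C, ∀ w ∈ C, col z = col w) (hAC : ∀ a ∈ A, ∀ c ∈ C, col a ≠ col c) (k : ℕ) :
    #{T ∈ placements row col (k + 1) (A ∪ C) | ¬T ⊆ A} =
      ∑ S ∈ placements row col k A, #{c ∈ C | row c ∉ S.image row} := by
  have hdisj : Disjoint A C := disjoint_left.mpr fun z hA hC => hAC z hA z hC rfl
  rw [← card_sigma]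
  symm
  refine card_nbij (fun x => insert x.2 x.1) ?_ ?_ ?_
  · rintro ⟨S, c⟩ hx
    obtain ⟨hS, hcfree⟩ := mem_sigma.mp hx
    obtain ⟨hc, hrow⟩ := mem_filter.mp hcfree
    refine mem_filter.mpr ⟨(insert_mem_placements_iff hAC (mem_placements.mp hS).1 hc).mpr
      ⟨hS, by rwa [← coe_image, mem_coe]⟩, fun hsub => ?_⟩
    exact disjoint_left.mp hdisj (hsub (mem_insert_self c S)) hc
  · rintro ⟨S, c⟩ hx ⟨S', c'⟩ hx' heq
    have hSA : S ⊆ A := (mem_placements.mp (mem_sigma.mp hx).1).1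
    have hSA' : S' ⊆ A := (mem_placements.mp (mem_sigma.mp hx').1).1
    have hcC : {c} ⊆ C := singleton_subset_iff.mpr (mem_filter.mp (mem_sigma.mp hx).2).1
    have hcC' : {c'} ⊆ C := singleton_subset_iff.mpr (mem_filter.mp (mem_sigma.mp hx').2).1
    simp only [insert_eq, union_comm {_}] at heq
    have hS : S = S' := by
      rw [← union_inter_eq_left_of_disjoint hdisj hSA hcC, heq,
        union_inter_eq_left_of_disjoint hdisj hSA' hcC']
    have hc : c = c' := singleton_injective <| by
      rw [← union_inter_eq_right_of_disjoint hdisj hSA hcC, heq,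
        union_inter_eq_right_of_disjoint hdisj hSA' hcC']
    rw [hS, hc]
  · intro T hT
    obtain ⟨hT, hTA⟩ := mem_filter.mp hT
    obtain ⟨c, hc, S, hS, rfl⟩ := exists_insert_eq_of_mem_placements hC hT hTA
    obtain ⟨hSk, hrow⟩ := (insert_mem_placements_iff hAC hS hc).mp hT
    exact ⟨⟨S, c⟩, mem_sigma.mpr ⟨hSk, mem_filter.mpr ⟨hc, by rwa [← mem_coe, coe_image]⟩⟩, rfl⟩

theorem card_placements_union_column (hC : ∀ z ∈ C, ∀ w ∈ C, col z = col w)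
    (hAC : ∀ a ∈ A, ∀ c ∈ C, col a ≠ col c) (hCrow : Set.InjOn row (C : Set α))
    (hrow : row '' (A : Set α) ⊆ row '' (C : Set α)) (k : ℕ) :
    (#(placements row col (k + 1) (A ∪ C)) : ℚ) =
      #(placements row col (k + 1) A) + (#C - k) * #(placements row col k A) := by
  classical
  have hsubset : {T ∈ placements row col (k + 1) (A ∪ C) | T ⊆ A} =
      placements row col (k + 1) A := by
    ext T
    simp only [mem_filter, mem_placements]
    exact ⟨fun h => ⟨h.2, h.1.2⟩, fun h => ⟨⟨h.1.trans subset_union_left, h.2⟩, h.1⟩⟩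
  have hfree : ∀ S ∈ placements row col k A,
      (#{c ∈ C | row c ∉ S.image row} : ℚ) = #C - k := by
    intro S hS
    obtain ⟨hSA, rfl, hSrow, -⟩ := mem_placements.mp hS
    rw [eq_sub_iff_add_eq]
    exact_mod_cast card_filter_row_notMem_image_add_card hCrow hSrow
      ((Set.image_mono (coe_subset.mpr hSA)).trans hrow)
  rw [← card_filter_add_card_filter_not (s := placements row col (k + 1) (A ∪ C)) (· ⊆ A), hsubset,
    card_filter_not_subset_placements_union hC hAC, Nat.cast_add, Nat.cast_sum,
    sum_congr rfl hfree, sum_const, nsmul_eq_mul, mul_comm]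

theorem IsFerrers.card_placements_biUnion {C : ℕ → Finset α} {h : ℕ → ℚ} {m : ℕ}
    (hC : IsFerrers row col C m) (hcard : ∀ i < m, (#(C i) : ℚ) = h i) (k : ℕ) :
    (#(placements row col k ((range m).biUnion C)) : ℚ) = rookNumber h k m := by
  induction m generalizing k with
  | zero =>
    cases k with
    | zero => rw [card_placements_zero, rookNumber, Nat.cast_one]
    | succ k => rw [range_zero, biUnion_empty, placements_succ_empty, rookNumber, card_empty,
        Nat.cast_zero]
  | succ m ih =>
    have ihm := ih (hC.mono m.le_succ) fun i hi => hcard i (hi.trans m.lt_succ_self)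
    cases k with
    | zero => rw [card_placements_zero, rookNumber, Nat.cast_one]
    | succ k =>
      rw [rookNumber, ← ihm, ← ihm, ← hcard m m.lt_succ_self, range_add_one, biUnion_insert,
        union_comm]
      refine card_placements_union_column ?_ ?_ (hC.injOn_row m m.lt_succ_self) ?_ k
      · intro z hz w hw
        exact (hC.col_eq_iff m m.lt_succ_self m m.lt_succ_self z hz w hw).mpr rfl
      · intro a ha c hc hac
        obtain ⟨i, hi, ha⟩ := mem_biUnion.mp ha
        have him := mem_range.mp hi
        exact him.ne ((hC.col_eq_iff i (by lia) m m.lt_succ_self a ha c hc).mp hac)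
      · simp only [coe_biUnion, Set.image_iUnion₂, Set.iUnion₂_subset_iff]
        exact fun i hi => hC.image_row_subset i m (mem_range.mp hi).le m.lt_succ_self

end Placements

section Bishops

/-- The square board `{1, …, n}²`. -/
noncomputable def board (n : ℕ) : Finset (ℤ × ℤ) :=
  Icc 1 (n : ℤ) ×ˢ Icc 1 (n : ℤ)

/-- Nonattacking placements of `k` bishops on the cells in `B`, with antidiagonals as rows and
diagonals as columns. -/
noncomputable abbrev bishopPlacements (k : ℕ) (B : Finset (ℤ × ℤ)) : Finset (Finset (ℤ × ℤ)) :=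
  placements (fun z => z.1 + z.2) (fun z => z.1 - z.2) k B

/-- The diagonal `x - y = d` of the board of size `n`. -/
noncomputable def boardDiagonal (n : ℕ) (d : ℤ) : Finset (ℤ × ℤ) :=
  {z ∈ board n | z.1 - z.2 = d}

/-- The length of the `i`-th shortest diagonal in the colour class `c`, for `c ≤ 1`. The lengths
are `0, 2, 2, 4, 4, …` for `c = 0` and `1, 1, 3, 3, …` for `c = 1`; an empty diagonal is included
for `c = 0` so that both classes of the board of size `n` have `n` diagonals. -/
def diagonalLength (c i : ℕ) : ℕ :=
  2 * ((i + 1 - c) / 2) + c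

/-- The position `x - y` of the `i`-th shortest diagonal in the colour class `c`, for `c ≤ 1` and
`i < n`. Diagonals of the same length alternate between the two sides of the main diagonal. -/
def diagonalIndex (n c i : ℕ) : ℤ :=
  if i % 2 = 0 then n - diagonalLength c i else diagonalLength c i - n

/-- The colour class of cells with `x - y ≡ n - c` modulo `2`, for `c ≤ 1`, as a union of
diagonals. -/
noncomputable def colourClass (n c : ℕ) : Finset (ℤ × ℤ) :=
  (range n).biUnion fun i => boardDiagonal n (diagonalIndex n c i)

variable {n c i j : ℕ}

theorem mem_boardDiagonal {d : ℤ} {z : ℤ × ℤ} :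
    z ∈ boardDiagonal n d ↔ z ∈ board n ∧ z.1 - z.2 = d :=
  mem_filter

theorem mem_board {z : ℤ × ℤ} :
    z ∈ board n ↔ (1 ≤ z.1 ∧ z.1 ≤ n) ∧ 1 ≤ z.2 ∧ z.2 ≤ n := by
  rw [board, mem_product, mem_Icc, mem_Icc]

theorem card_board (n : ℕ) : #(board n) = n ^ 2 := by
  rw [board, card_product, Int.card_Icc, sq, add_sub_cancel_right, Int.toNat_natCast]

theorem card_boardDiagonal (n : ℕ) (d : ℤ) : #(boardDiagonal n d) = (n - |d|).toNat := by
  have himage : boardDiagonal n d =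
      (Icc (max 1 (1 + d)) (min n (n + d))).image fun x => (x, x - d) := by
    ext ⟨x, y⟩
    simp only [mem_boardDiagonal, mem_board, mem_image, mem_Icc, Prod.mk.injEq]
    constructor
    · rintro ⟨hxy, rfl⟩
      exact ⟨x, by lia, rfl, by lia⟩
    · rintro ⟨x, hx, rfl, rfl⟩
      lia
  rw [himage, card_image_of_injective _ fun x y hxy => (Prod.mk.inj hxy).1, Int.card_Icc,
    abs_eq_max_neg]
  lia

theorem mem_image_add_boardDiagonal {d s : ℤ} :
    s ∈ (fun z : ℤ × ℤ => z.1 + z.2) '' (boardDiagonal n d : Set (ℤ × ℤ)) ↔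
      |s - (n + 1)| + |d| < n ∧ 2 ∣ s - d := by
  simp only [Set.mem_image, mem_coe, mem_boardDiagonal, mem_board, Prod.exists, abs_eq_max_neg]
  constructor
  · rintro ⟨x, y, hxy, rfl⟩
    lia
  · rintro ⟨hs, hsd⟩
    exact ⟨(s + d) / 2, (s - d) / 2, by lia, by lia⟩

theorem image_add_boardDiagonal_subset {d d' : ℤ} (habs : |d'| ≤ |d|) (hparity : 2 ∣ d - d') :
    (fun z : ℤ × ℤ => z.1 + z.2) '' (boardDiagonal n d : Set (ℤ × ℤ)) ⊆
      (fun z : ℤ × ℤ => z.1 + z.2) '' (boardDiagonal n d' : Set (ℤ × ℤ)) := by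
  intro s hs
  rw [mem_image_add_boardDiagonal] at hs ⊢
  lia

theorem abs_diagonalIndex (hc : c ≤ 1) (hi : i < n) :
    |diagonalIndex n c i| = n - diagonalLength c i := by
  rw [diagonalIndex, abs_eq_max_neg, diagonalLength]
  lia

theorem two_dvd_diagonalIndex (n c i : ℕ) : (2 : ℤ) ∣ diagonalIndex n c i - n + c := by
  rw [diagonalIndex, diagonalLength]
  lia

theorem diagonalIndex_inj (hc : c ≤ 1) (hi : i < n) (hj : j < n) :
    diagonalIndex n c i = diagonalIndex n c j ↔ i = j := by
  refine ⟨fun hij => ?_, fun hij => hij ▸ rfl⟩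
  simp only [diagonalIndex, diagonalLength] at hij
  lia

theorem diagonalLength_mono (c : ℕ) : Monotone (diagonalLength c) := by
  intro i j hij
  simp only [diagonalLength]
  lia

theorem exists_diagonalIndex_eq {d : ℤ} (hd : |d| < n) :
    ∃ c ≤ 1, ∃ i < n, diagonalIndex n c i = d := by
  obtain ⟨l, hl⟩ := Int.eq_ofNat_of_zero_le (sub_nonneg.mpr hd.le)
  rw [abs_eq_max_neg] at hd hl
  simp only [diagonalIndex, diagonalLength]
  by_cases hside : (l % 2 = 1 ↔ 0 < d) ∨ d = 0
  · exact ⟨l % 2, by lia, l - 1, by lia, by lia⟩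
  · exact ⟨l % 2, by lia, l, by lia, by lia⟩

theorem isFerrers_boardDiagonal (hc : c ≤ 1) (n : ℕ) :
    IsFerrers (fun z : ℤ × ℤ => z.1 + z.2) (fun z => z.1 - z.2)
      (fun i => boardDiagonal n (diagonalIndex n c i)) n where
  col_eq_iff i hi j hj z hz w hw := by
    rw [(mem_boardDiagonal.mp hz).2, (mem_boardDiagonal.mp hw).2, diagonalIndex_inj hc hi hj]
  injOn_row i _ z hz w hw hzw := by
    have hz' := (mem_boardDiagonal.mp hz).2
    have hw' := (mem_boardDiagonal.mp hw).2
    ext <;> lia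
  image_row_subset i j hij hj := by
    refine image_add_boardDiagonal_subset ?_ ?_
    · rw [abs_diagonalIndex hc hj, abs_diagonalIndex hc (hij.trans_lt hj)]
      exact sub_le_sub_left (Nat.cast_le.mpr (diagonalLength_mono c hij)) _
    · simpa only [add_sub_add_right_eq_sub, sub_sub_sub_cancel_right] using
        dvd_sub (two_dvd_diagonalIndex n c i) (two_dvd_diagonalIndex n c j)

theorem card_bishopPlacements_colourClass (hc : c ≤ 1) (k n : ℕ) :
    (#(bishopPlacements k (colourClass n c)) : ℚ) =
      rookNumber (fun i => diagonalLength c i) k n := by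
  refine (isFerrers_boardDiagonal hc n).card_placements_biUnion (fun i hi => ?_) k
  rw [card_boardDiagonal, abs_diagonalIndex hc hi, sub_sub_cancel, Int.toNat_natCast]

theorem mem_colourClass {z : ℤ × ℤ} :
    z ∈ colourClass n c ↔ z ∈ board n ∧ ∃ i < n, diagonalIndex n c i = z.1 - z.2 := by
  simp only [colourClass, mem_biUnion, mem_range, mem_boardDiagonal]
  grind

theorem colourClass_union (n : ℕ) : colourClass n 0 ∪ colourClass n 1 = board n := by
  ext z
  simp only [mem_union, mem_colourClass, ← and_or_left, and_iff_left_iff_imp]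
  intro hz
  have hd : |z.1 - z.2| < n := by
    rw [mem_board] at hz
    rw [abs_lt]
    lia
  obtain ⟨c, hc, hi⟩ := exists_diagonalIndex_eq hd
  obtain rfl | rfl := Nat.le_one_iff_eq_zero_or_eq_one.mp hc
  · exact Or.inl hi
  · exact Or.inr hi

theorem two_dvd_of_mem_colourClass {z : ℤ × ℤ} (hz : z ∈ colourClass n c) :
    2 ∣ z.1 - z.2 - n + c := by
  obtain ⟨-, i, -, hi⟩ := mem_colourClass.mp hz
  exact hi ▸ two_dvd_diagonalIndex n c i

theorem card_bishopPlacements_board (q n : ℕ) :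
    (#(bishopPlacements q (board n)) : ℚ) = ∑ x ∈ antidiagonal q,
      rookNumber (fun i => diagonalLength 0 i) x.1 n *
        rookNumber (fun i => diagonalLength 1 i) x.2 n := by
  rw [← colourClass_union, bishopPlacements, card_placements_union]
  · simp only [Nat.cast_sum, Nat.cast_mul, card_bishopPlacements_colourClass zero_le_one,
      card_bishopPlacements_colourClass le_rfl]
  · intro a ha b hb
    have ha' := two_dvd_of_mem_colourClass ha
    have hb' := two_dvd_of_mem_colourClass hb
    constructor <;> lia

theorem isPosQuasipolynomial_diagonalLength (hc : c ≤ 1) :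
    IsPosQuasipolynomial 2 1 fun i => diagonalLength c i := by
  refine ⟨fun i => X + C (diagonalLength c i - i : ℚ), fun i => ⟨natDegree_X_add_C _, ?_⟩,
    fun n => ?_⟩
  · rw [leadingCoeff_X_add_C]
    exact one_pos
  · have hperiod : diagonalLength c n + n % 2 = n + diagonalLength c (n % 2) := by
      simp only [diagonalLength]
      lia
    simp only [eval_add, eval_X, eval_C]
    rw [← add_sub_assoc, eq_sub_iff_add_eq]
    exact_mod_cast hperiod

theorem isPosQuasipolynomial_card_bishopPlacements (q : ℕ) :
    IsPosQuasipolynomial 2 (2 * q) fun n => #(bishopPlacements q (board n)) := by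
  simp only [card_bishopPlacements_board]
  refine .sum ⟨(0, q), by simp⟩ fun x hx => ?_
  rw [← HasAntidiagonal.mem_antidiagonal.mp hx, mul_add]
  exact (isPosQuasipolynomial_rookNumber two_pos one_pos
    (isPosQuasipolynomial_diagonalLength zero_le_one) x.1).mul
    (isPosQuasipolynomial_rookNumber two_pos one_pos
      (isPosQuasipolynomial_diagonalLength le_rfl) x.2)

theorem isPosQuasipolynomial_card_bishopPlacements_one :
    IsPosQuasipolynomial 1 2 fun n => #(bishopPlacements 1 (board n)) :=
  ⟨fun _ => X ^ 2, fun _ => ⟨natDegree_X_pow 2, by simp⟩, fun n => by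
    simp only [card_placements_one, card_board, eval_pow, eval_X, Nat.cast_pow]⟩

theorem setOf_nonattacking_eq_bishopPlacements (q n : ℕ) :
    {S : Finset (ℤ × ℤ) | S.card = q ∧
      (∀ z ∈ S, 1 ≤ z.1 ∧ z.1 ≤ (n : ℤ) ∧ 1 ≤ z.2 ∧ z.2 ≤ (n : ℤ)) ∧
      (∀ z ∈ S, ∀ w ∈ S, z ≠ w → z.1 + z.2 ≠ w.1 + w.2 ∧ z.1 - z.2 ≠ w.1 - w.2)} =
      bishopPlacements q (board n) := by
  ext S
  simp only [Set.mem_ofPred_eq, mem_coe, mem_placements, subset_iff, mem_board, IsNonattacking,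
    Set.InjOn, and_assoc]
  grind

end Bishops

/-- the counting function `u_B(q;n)` for `q` nonattacking bishops on the
square board is a quasipolynomial in `n` of degree `2q` whose period divides `2^(q-1)`. -/
theorem stmt_16 (q : ℕ) (hq : 0 < q)
    (u : ℕ → ℕ)
    (hu : ∀ n : ℕ, u n = Set.ncard {S : Finset (ℤ × ℤ) |
      S.card = q ∧
      (∀ z ∈ S, 1 ≤ z.1 ∧ z.1 ≤ (n : ℤ) ∧ 1 ≤ z.2 ∧ z.2 ≤ (n : ℤ)) ∧
      (∀ z ∈ S, ∀ w ∈ S, z ≠ w →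
        z.1 + z.2 ≠ w.1 + w.2 ∧ z.1 - z.2 ≠ w.1 - w.2)}) :
    ∃ f : ℕ → Polynomial ℚ,
      (∀ k < 2 ^ (q - 1), (f k).degree = ((2 * q : ℕ) : WithBot ℕ)) ∧
      (∀ n : ℕ, (u n : ℚ) = (f (n % 2 ^ (q - 1))).eval (n : ℚ)) := by
  have hquasi : IsPosQuasipolynomial (2 ^ (q - 1)) (2 * q) fun n => u n := by
    simp only [hu, setOf_nonattacking_eq_bishopPlacements, Set.ncard_coe_finset]
    obtain rfl | hq2 := (Nat.one_le_iff_ne_zero.mpr hq.ne').eq_or_lt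
    · exact isPosQuasipolynomial_card_bishopPlacements_one
    · exact (isPosQuasipolynomial_card_bishopPlacements q).of_dvd (dvd_pow_self 2 (by lia))
  obtain ⟨f, hf, huf⟩ := hquasi
  exact ⟨f, fun k _ => (hf k).degree_eq, huf⟩
end
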